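/- arXiv:1206.7094 — 8 statements merged into one kernel-verified Lean document; each statement's English description precedes it below -/
import Mathlib

section
/- Let L be an n×n positive critical binomial matrix. For every i = 1,…,n, the principal minor det(L_{i,i}) obtained by deleting the i-th row and i-th column of L is strictly positive; consequently the rank of L (as a matrix over ℚ) equals n−1. -/
/-!
Deleting row and column `i` of a PCB matrix removes a strictly negative entry from every remaining
row, so the remaining matrix is strictly diagonally dominant by rows, with positive diagonal. Such a
real matrix has positive determinant (`det_pos_of_sum_row_lt_diag`): scaling the off-diagonal
entries by `t ∈ [0, 1]` preserves dominance, so the determinant never vanishes along this path, and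
at `t = 0` it is the product of the diagonal entries.

For the rank, a nonvanishing minor of order `n` gives `n ≤ rank L`, and the all-ones vector in the
kernel gives `rank L < n + 1`.
-/

/-- Strict row dominance with positive diagonal gives a positive, not merely nonzero, determinant:
nonvanishing is Gershgorin's theorem, and the sign is carried along the path from the diagonal part
of `A` to `A`. -/
lemma det_pos_of_sum_row_lt_diag {m : Type*} [Fintype m] [DecidableEq m] (A : Matrix m m ℝ)
    (hdiag : ∀ k, 0 < A k k) (h : ∀ k, ∑ j ∈ Finset.univ.erase k, |A k j| < A k k) :
    0 < A.det := by
  let B : ℝ → Matrix m m ℝ := fun t => Matrix.of fun i j => if i = j then A i i else t * A i j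
  have hB : ∀ t ∈ Set.Icc (0 : ℝ) 1, (B t).det ≠ 0 := by
    intro t ht
    apply det_ne_zero_of_sum_row_lt_diag
    intro k
    have hle : ∑ j ∈ Finset.univ.erase k, ‖B t k j‖ ≤ ∑ j ∈ Finset.univ.erase k, |A k j| := by
      apply Finset.sum_le_sum
      intro j hj
      have hkj : k ≠ j := (Finset.ne_of_mem_erase hj).symm
      simp only [B, Matrix.of_apply, if_neg hkj, Real.norm_eq_abs, abs_mul, abs_of_nonneg ht.1]
      exact mul_le_of_le_one_left (abs_nonneg _) ht.2
    calc _ ≤ _ := hle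
      _ < A k k := h k
      _ = ‖B t k k‖ := by simp [B, abs_of_pos (hdiag k)]
  have hcont : Continuous fun t => (B t).det := by
    apply Continuous.matrix_det
    refine continuous_matrix fun i j => ?_
    by_cases hij : i = j
    · simp only [B, Matrix.of_apply, if_pos hij]
      exact continuous_const
    · simp only [B, Matrix.of_apply, if_neg hij]
      fun_prop
  have hB0 : 0 < (B 0).det := by
    have : B 0 = Matrix.diagonal fun i => A i i := by
      ext i j
      simp [B, Matrix.diagonal_apply]
    rw [this, Matrix.det_diagonal]
    exact Finset.prod_pos fun i _ => hdiag i
  have hB1 : B 1 = A := by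
    ext i j
    by_cases hij : i = j
    · subst hij
      simp [B]
    · simp [B, hij]
  by_contra hneg
  rw [← hB1, not_lt] at hneg
  obtain ⟨t, ht, h0⟩ := intermediate_value_Icc' zero_le_one hcont.continuousOn ⟨hneg, hB0.le⟩
  exact hB t ht h0

/-- For an `(n+1)×(n+1)` positive critical binomial (PCB) matrix `L`
(diagonal entries `a i i`, off-diagonal entries `-(a i j)`, with all `a i j > 0` and
`a i i = ∑_{j ≠ i} a i j`, so each row sums to zero), every principal minor
`det (L_{i,i})` (deleting the `i`-th row and column) is strictly positive, and
consequently the rank of `L` over `ℚ` equals `n` (i.e. size minus one). -/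
theorem stmt0 {n : ℕ} (hn : 1 ≤ n)
    (a : Fin (n + 1) → Fin (n + 1) → ℕ) (hpos : ∀ i j, 0 < a i j)
    (hsum : ∀ i, a i i = ∑ j ∈ Finset.univ.erase i, a i j)
    (L : Matrix (Fin (n + 1)) (Fin (n + 1)) ℤ)
    (hL : ∀ i j, L i j = if i = j then (a i i : ℤ) else -(a i j : ℤ)) :
    (∀ i : Fin (n + 1), 0 < (L.submatrix i.succAbove i.succAbove).det) ∧
      (L.map (Int.cast : ℤ → ℚ)).rank = n := by
  have hrow : ∀ p, ∑ j, a p j = 2 * a p p := by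
    intro p
    rw [← Finset.add_sum_erase _ _ (Finset.mem_univ p), ← hsum p, two_mul]
  have hminor : ∀ i : Fin (n + 1), 0 < (L.submatrix i.succAbove i.succAbove).det := by
    intro i
    have key : 0 < ((L.submatrix i.succAbove i.succAbove).map (Int.cast : ℤ → ℝ)).det := by
      apply det_pos_of_sum_row_lt_diag
      · intro k
        simp [hL, hpos]
      · intro k
        have habs : ∀ j ∈ Finset.univ.erase k,
            |((L.submatrix i.succAbove i.succAbove).map (Int.cast : ℤ → ℝ)) k j|
              = ((a (i.succAbove k) (i.succAbove j) : ℕ) : ℝ) := by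
          intro j hj
          have hkj : k ≠ j := (Finset.ne_of_mem_erase hj).symm
          simp [hL, hkj]
        rw [Finset.sum_congr rfl habs]
        have hr := hrow (i.succAbove k)
        rw [Fin.sum_univ_succAbove _ i, ← Finset.add_sum_erase _ _ (Finset.mem_univ k)] at hr
        have hp := hpos (i.succAbove k) i
        simp only [Matrix.map_apply, Matrix.submatrix_apply, hL, if_true, Int.cast_natCast]
        exact_mod_cast (by lia)
    have hcast : ((L.submatrix i.succAbove i.succAbove).map (Int.cast : ℤ → ℝ)).det
        = (((L.submatrix i.succAbove i.succAbove).det : ℤ) : ℝ) :=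
      (Int.cast_det _).symm
    rw [hcast] at key
    exact_mod_cast key
  refine ⟨hminor, le_antisymm ?_ ?_⟩
  · have hker : (fun _ => 1 : Fin (n + 1) → ℚ) ∈
        LinearMap.ker (L.map (Int.cast : ℤ → ℚ)).mulVecLin := by
      rw [LinearMap.mem_ker]
      ext p
      have hz : ∑ j, L p j = 0 := by
        rw [← Finset.add_sum_erase _ _ (Finset.mem_univ p), hL p p, if_pos rfl, hsum p]
        rw [Finset.sum_congr rfl fun j hj =>
          (hL p j).trans (if_neg (Finset.ne_of_mem_erase hj).symm)]
        simp
      simp only [Matrix.mulVecLin_apply, Matrix.mulVec, dotProduct, Matrix.map_apply, mul_one,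
        Pi.zero_apply]
      exact_mod_cast hz
    have hne : LinearMap.ker (L.map (Int.cast : ℤ → ℚ)).mulVecLin ≠ ⊥ := by
      intro hbot
      rw [hbot, Submodule.mem_bot] at hker
      exact one_ne_zero (congrFun hker 0)
    have h1 := Submodule.one_le_finrank_iff.mpr hne
    have h2 := LinearMap.finrank_range_add_finrank_ker (L.map (Int.cast : ℤ → ℚ)).mulVecLin
    rw [Module.finrank_fin_fun] at h2
    rw [Matrix.rank]
    lia
  · have hdet : ((L.map (Int.cast : ℤ → ℚ)).submatrix
        (Fin.succAbove 0) (Fin.succAbove 0)).det ≠ 0 := by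
      have hcast : ((L.map (Int.cast : ℤ → ℚ)).submatrix (Fin.succAbove 0) (Fin.succAbove 0)).det
          = (((L.submatrix (Fin.succAbove 0) (Fin.succAbove 0)).det : ℤ) : ℚ) :=
        (Int.cast_det _).symm
      rw [hcast]
      exact_mod_cast (hminor 0).ne'
    have hle := (L.map (Int.cast : ℤ → ℚ)).rank_submatrix_le (Fin.succAbove 0) (Fin.succAbove 0)
    rwa [Matrix.rank_of_det_ne_zero hdet, Fintype.card_fin] at hle
end

section
/- Let L be an n×n positive critical binomial matrix and let m denote the last row of adj(L). A rational column vector v ∈ ℚ^n satisfies Lᵀ v = 0 if and only if v is a rational scalar multiple of mᵀ; that is, the null space of Lᵀ over ℚ is one-dimensional and is spanned by the transpose of the last row of adj(L). -/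
/-!
Since the rows of `L` sum to zero, `det L = 0`, so `adj(L) * L = 0` and the last row `m` of
`adj(L)` lies in the left kernel of `L`. The principal minor of `L` obtained by deleting the last
row and column is strictly diagonally dominant (each row loses a positive entry `a i n`), hence
nonsingular by Gershgorin (`det_submatrix_castSucc_ne_zero`). This gives both that the last
coordinate of `m` is nonzero and that a left kernel vector of `L` with vanishing last coordinate
is zero; so `v - (v_n / m_n) • m = 0` for every `v` in the left kernel.
-/

/-- The principal minor deleting the last row and column is nonzero, by strict diagonal
dominance. -/
lemma det_submatrix_castSucc_ne_zero {n : ℕ}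
    (a : Fin (n + 1) → Fin (n + 1) → ℕ) (hpos : ∀ i j, 0 < a i j)
    (hsum : ∀ i, a i i = ∑ j ∈ Finset.univ.erase i, a i j)
    (A : Matrix (Fin (n + 1)) (Fin (n + 1)) ℚ)
    (hA : ∀ i j, A i j = if i = j then (a i i : ℚ) else -(a i j : ℚ)) :
    (A.submatrix Fin.castSucc Fin.castSucc).det ≠ 0 := by
  have hnorm : ∀ i j, ‖A i j‖ = (a i j : ℝ) := by
    intro i j
    rw [hA]
    split_ifs with h
    · subst h; simp [← Rat.norm_cast_real]
    · simp [← Rat.norm_cast_real]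
  apply det_ne_zero_of_sum_row_lt_diag
  intro k
  simp only [Matrix.submatrix_apply, hnorm]
  norm_cast
  have h1 := Finset.add_sum_erase Finset.univ (fun j => a k.castSucc j)
    (Finset.mem_univ k.castSucc)
  have h2 := Finset.add_sum_erase Finset.univ (fun j : Fin n => a k.castSucc j.castSucc)
    (Finset.mem_univ k)
  rw [Fin.sum_univ_castSucc] at h1
  have h3 := hsum k.castSucc
  have h4 := hpos k.castSucc (Fin.last n)
  omega

/-- For an `(n+1)×(n+1)` positive critical binomial (PCB) matrix `L`,
with `m` the last row of `adj(L)`, a rational vector `v` satisfies `Lᵀ v = 0` iff `v`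
is a rational scalar multiple of `m`; i.e. the null space of `Lᵀ` over `ℚ` is spanned
by the transpose of the last row of the adjugate. -/
theorem stmt2 {n : ℕ} (hn : 1 ≤ n)
    (a : Fin (n + 1) → Fin (n + 1) → ℕ) (hpos : ∀ i j, 0 < a i j)
    (hsum : ∀ i, a i i = ∑ j ∈ Finset.univ.erase i, a i j)
    (L : Matrix (Fin (n + 1)) (Fin (n + 1)) ℤ)
    (hL : ∀ i j, L i j = if i = j then (a i i : ℤ) else -(a i j : ℤ)) :
    ∀ v : Fin (n + 1) → ℚ,
      (L.map (Int.cast : ℤ → ℚ)).transpose.mulVec v = 0 ↔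
        ∃ c : ℚ, v = c • fun i => ((L.adjugate (Fin.last n) i : ℚ)) := by
  set A : Matrix (Fin (n + 1)) (Fin (n + 1)) ℚ := L.map (Int.cast : ℤ → ℚ) with hAdef
  have hA : ∀ i j, A i j = if i = j then (a i i : ℚ) else -(a i j : ℚ) := by
    intro i j
    simp only [hAdef, Matrix.map_apply, hL]
    split_ifs <;> simp
  have hM := det_submatrix_castSucc_ne_zero a hpos hsum A hA
  have hadj : (fun i => (L.adjugate (Fin.last n) i : ℚ)) = A.adjugate (Fin.last n) := by
    have h := RingHom.map_adjugate (Int.castRingHom ℚ) L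
    funext i
    exact congrFun (congrFun h (Fin.last n)) i
  have hdet : A.det = 0 := by
    rw [← Matrix.exists_mulVec_eq_zero_iff]
    refine ⟨fun _ => 1, fun h => one_ne_zero (congrFun h 0), ?_⟩
    funext i
    have h1 := Finset.add_sum_erase Finset.univ (fun j => A i j) (Finset.mem_univ i)
    have h2 : ∑ j ∈ Finset.univ.erase i, A i j = -(a i i : ℚ) := by
      rw [hsum i, Nat.cast_sum, ← Finset.sum_neg_distrib]
      refine Finset.sum_congr rfl fun j hj => ?_
      rw [hA, if_neg (Finset.ne_of_mem_erase hj).symm]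
    have h3 : A i i = a i i := by simp [hA]
    simp only [Matrix.mulVec, dotProduct, mul_one, Pi.zero_apply]
    linarith
  set m := A.adjugate (Fin.last n) with hm
  have hmker : Matrix.vecMul m A = 0 := by
    have h := Matrix.adjugate_mul A
    rw [hdet, zero_smul] at h
    exact congrFun h (Fin.last n)
  have hmlast : m (Fin.last n) ≠ 0 := by
    rw [hm, Matrix.adjugate_fin_succ_eq_det_submatrix]
    simpa [Fin.succAbove_last] using hM
  intro v
  rw [Matrix.mulVec_transpose, hadj]
  constructor
  · intro hv
    refine ⟨v (Fin.last n) / m (Fin.last n), ?_⟩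
    set c := v (Fin.last n) / m (Fin.last n) with hc
    have hw : Matrix.vecMul (v - c • m) A = 0 := by
      rw [Matrix.sub_vecMul, Matrix.smul_vecMul, hv, hmker]
      simp
    have hwlast : (v - c • m) (Fin.last n) = 0 := by
      simp [hc, hmlast]
    have hw' : (fun j : Fin n => (v - c • m) j.castSucc) = 0 := by
      apply Matrix.eq_zero_of_vecMul_eq_zero hM
      funext j
      have h := congrFun hw j.castSucc
      simp only [Matrix.vecMul, dotProduct] at h ⊢
      rw [Fin.sum_univ_castSucc, hwlast, zero_mul, add_zero] at h
      exact h
    rw [← sub_eq_zero]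
    funext i
    induction i using Fin.lastCases with
    | last => exact hwlast
    | cast j => exact congrFun hw' j
  · rintro ⟨c, rfl⟩
    rw [Matrix.smul_vecMul, hmker, smul_zero]
end

section
/- Any subset of n−1 of the binomials f_1,…,f_n generating the PCB ideal I forms a regular sequence in A (in any order). -/
open MvPolynomial

/-!
Let `m` be the index missing from the image of `σ`. Modulo `X m` every `f j` with `j ≠ m` becomes
`X j ^ a j j`, so `X m, f (σ 0), …, f (σ (n-1))` is a regular sequence: its prefixes generate
monomial ideals, and `X j` is a nonzerodivisor modulo monomials not involving `X j`
(`mem_of_X_pow_mul_mem`).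

It remains to move `X m` from the front to the end. Since `L` is singular it has a nonzero left
kernel vector, and the positivity of the `a i j` forces its absolute values to form a strictly
positive left kernel vector `w` (`exists_weight`). With `X i` given weight `w i`, every `f j` is
weighted homogeneous, so the ideals `J` generated by the `f j` are homogeneous, and an element of
`J + (X m ^ N)` for every `N` lies in `J` (`mem_of_forall_mem_sup`). This Krull-type separatedness is
what the usual proof that regular sequences may be permuted needs (`regular_of_regular_mod_X` and
`X_regular_step`).
-/

/-- A PCB matrix has a strictly positive integral left kernel vector. -/
lemma exists_weight {n : ℕ} (a : Fin (n + 1) → Fin (n + 1) → ℕ) (hpos : ∀ i j, 0 < a i j)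
    (hsum : ∀ i, a i i = ∑ j ∈ Finset.univ.erase i, a i j) :
    ∃ w : Fin (n + 1) → ℕ, (∀ i, 0 < w i) ∧
      ∀ j, w j * a j j = ∑ i ∈ Finset.univ.erase j, w i * a i j := by
  classical
  let L : Matrix (Fin (n + 1)) (Fin (n + 1)) ℤ :=
    fun i j => if i = j then (a i j : ℤ) else -(a i j : ℤ)
  have hdet : L.det = 0 := by
    refine Matrix.exists_mulVec_eq_zero_iff.mp ⟨fun _ => 1, ?_, ?_⟩
    · intro h
      simpa using congrFun h 0
    · funext i
      simp only [Matrix.mulVec, dotProduct, mul_one, Pi.zero_apply]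
      rw [← Finset.add_sum_erase _ _ (Finset.mem_univ i)]
      have h1 : ∑ j ∈ Finset.univ.erase i, L i j = -∑ j ∈ Finset.univ.erase i, (a i j : ℤ) := by
        rw [← Finset.sum_neg_distrib]
        refine Finset.sum_congr rfl fun j hj => ?_
        simp [L, (Finset.ne_of_mem_erase hj).symm]
      have h2 : (a i i : ℤ) = ∑ j ∈ Finset.univ.erase i, (a i j : ℤ) := by exact_mod_cast hsum i
      rw [h1]
      simp only [L, if_true]
      linarith
  obtain ⟨v, hv0, hv⟩ := Matrix.exists_vecMul_eq_zero_iff.mpr hdet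
  have hker : ∀ j, v j * a j j = ∑ i ∈ Finset.univ.erase j, v i * a i j := by
    intro j
    have h := congrFun hv j
    simp only [Matrix.vecMul, dotProduct, Pi.zero_apply] at h
    rw [← Finset.add_sum_erase _ _ (Finset.mem_univ j)] at h
    have h1 : ∑ i ∈ Finset.univ.erase j, v i * L i j
        = -∑ i ∈ Finset.univ.erase j, v i * (a i j : ℤ) := by
      rw [← Finset.sum_neg_distrib]
      refine Finset.sum_congr rfl fun i hi => ?_
      simp [L, Finset.ne_of_mem_erase hi]
    rw [h1] at h
    simp only [L, if_true] at h
    linarith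
  have hle : ∀ j ∈ Finset.univ,
      (v j).natAbs * a j j ≤ ∑ i ∈ Finset.univ.erase j, (v i).natAbs * a i j := by
    intro j _
    have h : |v j * a j j| ≤ ∑ i ∈ Finset.univ.erase j, |v i * a i j| := by
      rw [hker j]
      exact Finset.abs_sum_le_sum_abs _ _
    simp only [abs_mul, Nat.abs_cast] at h
    zify
    exact h
  -- Summing the inequalities over all columns and using the row sums gives equality throughout.
  have htot : ∑ j, (v j).natAbs * a j j
      = ∑ j, ∑ i ∈ Finset.univ.erase j, (v i).natAbs * a i j := by
    have h1 : ∀ i, (v i).natAbs * a i i = ∑ j ∈ Finset.univ.erase i, (v i).natAbs * a i j := by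
      intro i
      rw [hsum i, Finset.mul_sum]
    rw [Finset.sum_congr rfl fun i _ => h1 i]
    refine Finset.sum_comm' fun x y => ?_
    simp [eq_comm]
  have heq := (Finset.sum_eq_sum_iff_of_le hle).mp htot
  refine ⟨fun i => (v i).natAbs, fun j => ?_, fun j => heq j (Finset.mem_univ j)⟩
  by_contra hj
  have hj0 : (v j).natAbs = 0 := by simpa using hj
  have h := heq j (Finset.mem_univ j)
  rw [hj0, zero_mul, eq_comm, Finset.sum_eq_zero_iff] at h
  apply hv0
  funext i
  by_cases hij : i = j
  · simpa [hij] using hj0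
  · have := h i (by simp [hij])
    simpa [(hpos i j).ne'] using this

/-- If no monomial of `S` involves `X j`, then `X j ^ e` is a nonzerodivisor modulo the monomial
ideal generated by `S`. -/
lemma mem_of_X_pow_mul_mem {τ k : Type*} [Field k] (S : Set (τ →₀ ℕ)) (j : τ)
    (hS : ∀ s ∈ S, s j = 0) (e : ℕ) (g : MvPolynomial τ k)
    (h : X j ^ e * g ∈ Ideal.span ((fun s => monomial s (1 : k)) '' S)) :
    g ∈ Ideal.span ((fun s => monomial s (1 : k)) '' S) := by
  classical
  rw [mem_ideal_span_monomial_image] at h ⊢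
  intro d hd
  obtain ⟨s, hs, hsd⟩ := h (Finsupp.single j e + d) (by
    rw [mem_support_iff, X_pow_eq_monomial, coeff_monomial_mul, one_mul]
    exact mem_support_iff.mp hd)
  refine ⟨s, hs, fun i => ?_⟩
  by_cases hij : i = j
  · subst hij
    simp [hS s hs]
  · simpa [Finsupp.single_apply, Ne.symm hij] using hsd i

/-- Homogeneous ideals are closed in the `X m`-adic topology, because `X m` has positive weight. -/
lemma mem_of_forall_mem_sup {τ k : Type*} [Field k] (w : τ → ℕ) (m : τ) (hm : 0 < w m)
    (S : Set (MvPolynomial τ k)) (hS : ∀ p ∈ S, ∃ d, IsWeightedHomogeneous w p d)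
    (g : MvPolynomial τ k)
    (hg : ∀ N : ℕ, ∃ h, g - X m ^ N * h ∈ Ideal.span S) : g ∈ Ideal.span S := by
  classical
  let _ := weightedGradedAlgebra k w
  have hI : (Ideal.span S).IsHomogeneous (weightedHomogeneousSubmodule k w) :=
    Ideal.homogeneous_span _ _ fun p hp => by
      obtain ⟨d, hd⟩ := hS p hp
      exact ⟨d, hd⟩
  rw [mem_iff_weightedHomogeneousComponent_mem k w hI]
  intro d
  obtain ⟨h, hh⟩ := hg (d + 1)
  have hc := weightedHomogeneousComponent_mem_of_mem k w hI hh d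
  rw [map_sub, weightedHomogeneousComponent_eq_zero' d (X m ^ (d + 1) * h), sub_zero] at hc
  · exact hc
  · intro e he
    -- Monomials divisible by `X m ^ (d + 1)` have weight at least `(d + 1) * w m > d`.
    rw [mem_support_iff, X_pow_eq_monomial, coeff_monomial_mul', ne_eq, ite_eq_right_iff,
      Classical.not_imp] at he
    obtain ⟨c, rfl⟩ := le_iff_exists_add.mp he.1
    rw [map_add, Finsupp.weight_single, smul_eq_mul]
    nlinarith

/-- If `x` is regular modulo `J`, `y` is regular modulo `J + (x)`, and `J` is `x`-adically closed,
then `y` is regular modulo `J`. -/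
lemma regular_of_regular_mod_X {R : Type*} [CommRing R] (J : Ideal R) (x y : R)
    (hx : ∀ g, x * g ∈ J → g ∈ J)
    (hy : ∀ g, y * g ∈ J ⊔ Ideal.span {x} → g ∈ J ⊔ Ideal.span {x})
    (hJ : ∀ g, (∀ N : ℕ, ∃ h, g - x ^ N * h ∈ J) → g ∈ J)
    (g : R) (hg : y * g ∈ J) : g ∈ J := by
  -- Elements killed by `y` modulo `J` can be divided by `x`, and the quotient is again killed.
  have key : ∀ N : ℕ, ∃ h, g - x ^ N * h ∈ J ∧ y * h ∈ J := by
    intro N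
    induction N with
    | zero => exact ⟨g, by simp, hg⟩
    | succ N ih =>
      obtain ⟨h, h1, h2⟩ := ih
      obtain ⟨j, hj, z, hz, rfl⟩ := Submodule.mem_sup.mp (hy h (Ideal.mem_sup_left h2))
      obtain ⟨c, rfl⟩ := Ideal.mem_span_singleton.mp hz
      refine ⟨c, ?_, hx _ ?_⟩
      · have := J.add_mem h1 (J.mul_mem_left (x ^ N) hj)
        convert this using 1
        ring
      · have := J.sub_mem h2 (J.mul_mem_left y hj)
        convert this using 1
        ring
  exact hJ g fun N => (key N).imp fun _ h => h.1

/-- If `x` is regular modulo `J` and `y` is regular modulo `J + (x)`, then `x` is regular modulo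
`J + (y)`. -/
lemma X_regular_step {R : Type*} [CommRing R] (J : Ideal R) (x y : R)
    (hx : ∀ g, x * g ∈ J → g ∈ J)
    (hy : ∀ g, y * g ∈ J ⊔ Ideal.span {x} → g ∈ J ⊔ Ideal.span {x})
    (g : R) (hg : x * g ∈ J ⊔ Ideal.span {y}) : g ∈ J ⊔ Ideal.span {y} := by
  obtain ⟨j, hj, z, hz, hjz⟩ := Submodule.mem_sup.mp hg
  obtain ⟨h, rfl⟩ := Ideal.mem_span_singleton.mp hz
  have h1 : y * h ∈ J ⊔ Ideal.span {x} := by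
    have h2 : y * h = -j + x * g := by rw [← hjz]; ring
    rw [h2]
    exact Submodule.add_mem_sup (J.neg_mem hj) (Ideal.mem_span_singleton.mpr ⟨g, rfl⟩)
  obtain ⟨j', hj', z', hz', rfl⟩ := Submodule.mem_sup.mp (hy h h1)
  obtain ⟨c, rfl⟩ := Ideal.mem_span_singleton.mp hz'
  have h3 : g - y * c ∈ J := by
    refine hx _ ?_
    have := J.add_mem hj (J.mul_mem_left y hj')
    convert this using 1
    linear_combination -hjz
  have h4 := Submodule.add_mem_sup h3
    (Ideal.mem_span_singleton.mpr ⟨c, rfl⟩ : y * c ∈ Ideal.span {y})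
  simpa using h4

/-- Modulo `X m`, each `f j` with `j ≠ m` is a power of `X j`; so `f (σ r)` is regular modulo `X m`
and the earlier `f (σ i)`. -/
lemma regular_mod_X {n : ℕ} {k : Type*} [Field k]
    (a : Fin (n + 1) → Fin (n + 1) → ℕ) (hpos : ∀ i j, 0 < a i j)
    (f : Fin (n + 1) → MvPolynomial (Fin (n + 1)) k)
    (hf : ∀ j, f j = X j ^ a j j - ∏ i ∈ Finset.univ.erase j, X i ^ a i j)
    (σ : Fin n → Fin (n + 1)) (hσ : Function.Injective σ) (m : Fin (n + 1)) (hm : ∀ i, σ i ≠ m)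
    (r : Fin n) (g : MvPolynomial (Fin (n + 1)) k)
    (hg : f (σ r) * g ∈ Ideal.span ((fun i => f (σ i)) '' {i | i < r}) ⊔ Ideal.span {X m}) :
    g ∈ Ideal.span ((fun i => f (σ i)) '' {i | i < r}) ⊔ Ideal.span {X m} := by
  have hdvd : ∀ i, ∃ c, f (σ i) = X (σ i) ^ a (σ i) (σ i) - X m * c := by
    intro i
    have hmem : m ∈ Finset.univ.erase (σ i) := by simp [(hm i).symm]
    obtain ⟨c, hc⟩ := (dvd_pow_self (X m : MvPolynomial (Fin (n + 1)) k)
      (hpos m (σ i)).ne').trans (Finset.dvd_prod_of_mem (fun l => X l ^ a l (σ i)) hmem)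
    exact ⟨c, by rw [hf, hc]⟩
  let S : Set (Fin (n + 1) →₀ ℕ) :=
    insert (Finsupp.single m 1) ((fun i => Finsupp.single (σ i) (a (σ i) (σ i))) '' {i | i < r})
  have hXm : (X m : MvPolynomial (Fin (n + 1)) k)
      ∈ Ideal.span ((fun s => monomial s (1 : k)) '' S) :=
    Ideal.subset_span ⟨_, Set.mem_insert _ _, rfl⟩
  have hIS : Ideal.span ((fun i => f (σ i)) '' {i | i < r}) ⊔ Ideal.span {X m}
      = Ideal.span ((fun s => monomial s (1 : k)) '' S) := by
    apply le_antisymm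
    · refine sup_le (Ideal.span_le.mpr ?_) (Ideal.span_le.mpr (by simpa using hXm))
      rintro _ ⟨i, hi, rfl⟩
      obtain ⟨c, hc⟩ := hdvd i
      simp only [hc, SetLike.mem_coe]
      refine Ideal.sub_mem _ ?_ (Ideal.mul_mem_right _ _ hXm)
      rw [X_pow_eq_monomial]
      exact Ideal.subset_span ⟨_, Set.mem_insert_of_mem _ ⟨i, hi, rfl⟩, rfl⟩
    · refine Ideal.span_le.mpr ?_
      have hX : (X m : MvPolynomial (Fin (n + 1)) k)
          ∈ Ideal.span ((fun i => f (σ i)) '' {i | i < r}) ⊔ Ideal.span {X m} :=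
        Ideal.mem_sup_right (Ideal.mem_span_singleton_self _)
      rintro _ ⟨s, rfl | ⟨i, hi, rfl⟩, rfl⟩
      · exact hX
      · obtain ⟨c, hc⟩ := hdvd i
        simp only [SetLike.mem_coe, ← X_pow_eq_monomial]
        rw [show X (σ i) ^ a (σ i) (σ i) = f (σ i) + X m * c by rw [hc]; ring]
        exact Ideal.add_mem _ (Ideal.mem_sup_left (Ideal.subset_span ⟨i, hi, rfl⟩))
          (Ideal.mul_mem_right _ _ hX)
  rw [hIS] at hg ⊢
  obtain ⟨c, hc⟩ := hdvd r
  refine mem_of_X_pow_mul_mem S (σ r) ?_ (a (σ r) (σ r)) g ?_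
  · rintro s (rfl | ⟨i, hi, rfl⟩)
    · simp [hm r]
    · have : σ i ≠ σ r := fun h => (ne_of_lt hi) (hσ h)
      simp [this]
  · rw [show X (σ r) ^ a (σ r) (σ r) * g = f (σ r) * g + X m * (c * g) by rw [hc]; ring]
    exact Ideal.add_mem _ hg (Ideal.mul_mem_right _ _ hXm)

/-- Let `I = (f 0, …, f n)` be the PCB ideal in
`A = k[x_0, …, x_n]` associated to an `(n+1)×(n+1)` PCB matrix, where
`f j = x_j ^ (a j j) - ∏_{i ≠ j} x_i ^ (a i j)`.  Then any `n` of the `n+1`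
binomials `f 0, …, f n`, in any order (i.e. the sequence `f (σ 0), …, f (σ (n-1))`
for any injective `σ : Fin n → Fin (n+1)`), form a regular sequence in `A`. -/
theorem stmt3 {n : ℕ} (hn : 1 ≤ n) (k : Type*) [Field k]
    (a : Fin (n + 1) → Fin (n + 1) → ℕ) (hpos : ∀ i j, 0 < a i j)
    (hsum : ∀ i, a i i = ∑ j ∈ Finset.univ.erase i, a i j)
    (f : Fin (n + 1) → MvPolynomial (Fin (n + 1)) k)
    (hf : ∀ j, f j = X j ^ a j j - ∏ i ∈ Finset.univ.erase j, X i ^ a i j) :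
    ∀ σ : Fin n → Fin (n + 1), Function.Injective σ →
      RingTheory.Sequence.IsRegular (MvPolynomial (Fin (n + 1)) k)
        (List.ofFn fun i : Fin n => f (σ i)) := by
  intro σ hσ
  obtain ⟨m, hm⟩ : ∃ m, ∀ i, σ i ≠ m := by
    have h : ¬ Function.Surjective σ := fun h => by
      have := Fintype.card_le_of_surjective σ h
      simp at this
    simpa [Function.Surjective] using h
  obtain ⟨w, hw, hwa⟩ := exists_weight a hpos hsum
  have hhom : ∀ j, IsWeightedHomogeneous w (f j) (w j * a j j) := by
    intro j
    rw [hf j]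
    refine IsWeightedHomogeneous.sub ?_ ?_
    · simpa [mul_comm] using (isWeightedHomogeneous_X k w j).pow (a j j)
    · rw [hwa j]
      refine IsWeightedHomogeneous.prod _ _ _ fun i _ => ?_
      simpa [mul_comm] using (isWeightedHomogeneous_X k w i).pow (a i j)
  have hclosed : ∀ (r : ℕ) (g : MvPolynomial (Fin (n + 1)) k),
      (∀ N : ℕ, ∃ h, g - X m ^ N * h ∈ Ideal.span ((fun i => f (σ i)) '' {i | i.1 < r})) →
      g ∈ Ideal.span ((fun i => f (σ i)) '' {i | i.1 < r}) := by
    intro r g hg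
    refine mem_of_forall_mem_sup w m (hw m) _ ?_ g hg
    rintro _ ⟨i, -, rfl⟩
    exact ⟨_, hhom _⟩
  have hXreg : ∀ (r : ℕ), r ≤ n → ∀ g : MvPolynomial (Fin (n + 1)) k,
      X m * g ∈ Ideal.span ((fun i => f (σ i)) '' {i | i.1 < r}) →
      g ∈ Ideal.span ((fun i => f (σ i)) '' {i | i.1 < r}) := by
    intro r
    induction r with
    | zero =>
      intro _ g hg
      simpa using hg
    | succ r ih =>
      intro hr g hg
      have hset : Ideal.span ((fun i => f (σ i)) '' {i : Fin n | i.1 < r + 1})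
          = Ideal.span ((fun i => f (σ i)) '' {i : Fin n | i.1 < r})
            ⊔ Ideal.span {f (σ ⟨r, hr⟩)} := by
        rw [← Ideal.span_union]
        congr 1
        have : {i : Fin n | i.1 < r + 1} = {i : Fin n | i.1 < r} ∪ {⟨r, hr⟩} := by
          ext i
          simp [Fin.ext_iff]
          omega
        rw [this, Set.image_union, Set.image_singleton]
      rw [hset] at hg ⊢
      exact X_regular_step _ (X m) _ (ih (by omega))
        (regular_mod_X a hpos f hf σ hσ m hm ⟨r, hr⟩) g hg
  have hofList : ∀ r : ℕ, Ideal.ofList ((List.ofFn fun i : Fin n => f (σ i)).take r)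
      = Ideal.span ((fun i => f (σ i)) '' {i | i.1 < r}) := by
    intro r
    unfold Ideal.ofList
    congr 1
    ext p
    simp only [Set.mem_ofPred_eq, Set.mem_image, List.mem_take_iff_getElem, List.getElem_ofFn,
      List.length_ofFn, lt_inf_iff]
    constructor
    · rintro ⟨i, hi, rfl⟩
      exact ⟨⟨i, by omega⟩, by simp; omega, rfl⟩
    · rintro ⟨i, hi, rfl⟩
      exact ⟨i.1, by have := i.2; omega, rfl⟩
  refine ⟨(RingTheory.Sequence.isWeaklyRegular_iff_Fin _ _).mpr ?_, ?_⟩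
  · rintro ⟨r, hr⟩
    have hrn : r < n := by simpa using hr
    rw [isSMulRegular_quotient_iff_mem_of_smul_mem]
    simp only [smul_eq_mul, Ideal.mul_top, hofList, Fin.getElem_fin, List.getElem_ofFn]
    exact regular_of_regular_mod_X _ (X m) _ (hXreg r hrn.le)
      (regular_mod_X a hpos f hf σ hσ m hm ⟨r, hrn⟩) (hclosed r)
  · -- All the `f j` vanish at the origin.
    intro htop
    have hle : Ideal.ofList (List.ofFn fun i : Fin n => f (σ i))
        ≤ RingHom.ker (constantCoeff : MvPolynomial (Fin (n + 1)) k →+* k) := by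
      refine Ideal.span_le.mpr fun p hp => ?_
      obtain ⟨i, rfl⟩ := (List.mem_ofFn' _ _).mp hp
      have hmem : m ∈ Finset.univ.erase (σ i) := by simp [(hm i).symm]
      simp only [SetLike.mem_coe, RingHom.mem_ker, hf, map_sub, map_pow, map_prod, constantCoeff_X]
      rw [zero_pow (hpos _ _).ne',
        Finset.prod_eq_zero hmem (zero_pow (hpos _ _).ne'), sub_zero]
    have h1 : (1 : MvPolynomial (Fin (n + 1)) k)
        ∈ Ideal.ofList (List.ofFn fun i : Fin n => f (σ i)) := by
      rw [smul_eq_mul, Ideal.mul_top] at htop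
      rw [← htop]
      trivial
    simpa [RingHom.mem_ker] using hle h1
end

section
/- The Herzog ideal 𝔭_{m(I)} is the unique Herzog ideal containing the PCB ideal I, and 𝔭_{m(I)} is a minimal prime of I; in particular, the height of I equals n−1. More precisely: I ⊆ 𝔭_{m(I)}; if I ⊆ 𝔭_v for some v ∈ ℕ_{>0}^n then 𝔭_v = 𝔭_{m(I)}; and 𝔭_{m(I)} is minimal over I. -/
/-!
Write `M` for the minor of `L` obtained by deleting the last row and column, so that
`m_last = det M`. It is strictly diagonally dominant, hence `det M ≠ 0`, and the left kernel of `L`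
is a line. As `adj(L) * L = det(L) = 0`, the line is spanned by `m`; positivity of the `a i j`
propagates from `m_last` to all `m_i`.

The binomial `f_j` lies in `𝔭_v` iff the `j`-th entry of `v * L` vanishes. So `I ≤ 𝔭_m`, and
`I ≤ 𝔭_v` forces `v` to be proportional to `m`. Scaling an exponent vector does not change the
Herzog ideal, because `t ↦ t ^ d` is injective on `k[t]`.

For the height, the point is that every prime `q ⊇ I` contains the binomials
`x_i ^ m_last - x_last ^ m_i` (`binomial_mem_of_prime`). If `q` contains a variable, it contains all
of them. Otherwise the variables are nonzero in the fraction field of `A / q`, where the relations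
`f_j = 0` can be combined along integer combinations of the columns of `L`, and a column of `adj(M)`
provides the combination `m_last e_i - m_i e_last` (`exists_lattice_vector`). These binomials are
monic in `x_i`, so adjoining the variables one by one to `k[x_last]` raises the height of the
contraction of `q` by at least one at each step (`height_comap_C_add_one_le`), whence
`height q ≥ n` (`le_height_of_binomials_mem`). On the other hand `𝔭_m` is properly contained in
`(x_0, …, x_n)`, so its height is at most `n` (`herzog_height_le`). Both the minimality of `𝔭_m`
over `I` and the height of `I` follow.
-/

open MvPolynomial

/-! ### Lower bounds for heights in polynomial rings -/

/-- With `p` the contraction of `P` to `R`, flatness of `R[X]` over `R` gives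
`height p ≤ height (p R[X])`, and a monic element of `P` shows that `p R[X]` is strictly smaller
than `P`. -/
theorem height_comap_C_add_one_le {R : Type*} [CommRing R] [IsNoetherianRing R]
    (P : Ideal (Polynomial R)) [P.IsPrime] {g : Polynomial R} (hg : g.Monic) (hgP : g ∈ P) :
    (P.comap Polynomial.C).height + 1 ≤ P.height := by
  set p := P.comap Polynomial.C with hp
  have hpp : p.IsPrime := Ideal.IsPrime.comap _
  have hmp : (p.map Polynomial.C).IsPrime := Ideal.isPrime_map_C_of_isPrime
  have hlo : (p.map Polynomial.C).LiesOver p := ⟨by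
    ext x
    simp only [Ideal.mem_comap, Ideal.under, Ideal.mem_map_C_iff, Polynomial.algebraMap_eq]
    constructor
    · intro hx i
      rw [Polynomial.coeff_C]
      split_ifs
      exacts [hx, p.zero_mem]
    · intro h
      simpa using h 0⟩
  have hle : p.map Polynomial.C ≤ P := Ideal.map_comap_le
  have hlt : p.map Polynomial.C < P := by
    refine lt_of_le_of_ne hle fun h => ?_
    rw [← h, Ideal.mem_map_C_iff] at hgP
    exact hpp.one_notMem (by simpa [hg.coeff_natDegree] using hgP g.natDegree)
  calc p.height + 1 ≤ (p.map Polynomial.C).height + 1 := by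
        rw [Ideal.height_eq_height_add_of_liesOver_of_hasGoingDown p (p.map Polynomial.C)]
        gcongr
        exact le_self_add
    _ ≤ P.height := Ideal.height_add_one_le_of_lt_of_isPrime hlt

/-- A prime of `k[x_0, …, x_N]` containing binomials `x_i ^ d - x_N ^ (e i)` for all `i < N` has height
at least `N`: peel off the variables `x_0, x_1, …` in turn, in each of which `q` contains a monic
polynomial. -/
theorem le_height_of_binomials_mem {k : Type*} [Field k] {d : ℕ} (hd : d ≠ 0) :
    ∀ (N : ℕ) (e : Fin N → ℕ) (q : Ideal (MvPolynomial (Fin (N + 1)) k)) [q.IsPrime],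
      (∀ i, X i.castSucc ^ d - X (Fin.last N) ^ e i ∈ q) → (N : ℕ∞) ≤ q.height
  | 0, _, _, _, _ => by simp
  | N + 1, e, q, hq, h => by
    let E := (finSuccEquiv k (N + 1)).toRingEquiv
    let P := q.map E
    have hmem : ∀ x ∈ q, finSuccEquiv k (N + 1) x ∈ P := fun x hx =>
      Ideal.mem_map_of_mem E hx
    have hP : P.IsPrime := Ideal.map_isPrime_of_equiv E
    have hht : P.height = q.height := E.height_map q
    have : (P.comap Polynomial.C).IsPrime := Ideal.IsPrime.comap _
    have ih := le_height_of_binomials_mem hd N (fun i => e i.succ) (P.comap Polynomial.C)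
      (fun i => by
        have := hmem _ (h i.succ)
        rw [← Fin.succ_castSucc, ← Fin.succ_last] at this
        simpa only [map_sub, map_pow, finSuccEquiv_X_succ, Ideal.mem_comap] using this)
    have h0 := hmem _ (h 0)
    rw [Fin.castSucc_zero, ← Fin.succ_last] at h0
    simp only [map_sub, map_pow, finSuccEquiv_X_succ, finSuccEquiv_X_zero] at h0
    rw [← map_pow] at h0
    have := height_comap_C_add_one_le P (Polynomial.monic_X_pow_sub_C _ hd) h0
    rw [← hht]
    push_cast
    exact le_trans (by gcongr) this

/-! ### The PCB matrix -/

/-- Deleting the last column makes the remaining rows strictly diagonally dominant, since every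
`a i last` is positive. -/
theorem det_minor_ne_zero {n : ℕ} {a : Fin (n + 1) → Fin (n + 1) → ℕ} (hpos : ∀ i j, 0 < a i j)
    (hsum : ∀ i, a i i = ∑ j ∈ Finset.univ.erase i, a i j)
    {L : Matrix (Fin (n + 1)) (Fin (n + 1)) ℤ}
    (hL : ∀ i j, L i j = if i = j then (a i i : ℤ) else -(a i j : ℤ)) :
    (L.submatrix Fin.castSucc Fin.castSucc).det ≠ 0 := by
  have key : ((L.submatrix Fin.castSucc Fin.castSucc).map (Int.cast : ℤ → ℝ)).det ≠ 0 := by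
    refine det_ne_zero_of_sum_row_lt_diag fun i => ?_
    have h1 : ∑ j ∈ Finset.univ.erase i,
        ‖(L.submatrix Fin.castSucc Fin.castSucc).map (Int.cast : ℤ → ℝ) i j‖
        = ((∑ j ∈ Finset.univ.erase i, a i.castSucc j.castSucc : ℕ) : ℝ) := by
      push_cast
      refine Finset.sum_congr rfl fun j hj => ?_
      have : i.castSucc ≠ j.castSucc := by
        simpa using (Finset.ne_of_mem_erase hj).symm
      simp [hL, this]
    have h2 : ‖(L.submatrix Fin.castSucc Fin.castSucc).map (Int.cast : ℤ → ℝ) i i‖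
        = (a i.castSucc i.castSucc : ℝ) := by simp [hL]
    rw [h1, h2, Nat.cast_lt]
    have h3 := Finset.add_sum_erase Finset.univ (fun j => a i.castSucc j)
      (Finset.mem_univ i.castSucc)
    have h4 := Finset.add_sum_erase Finset.univ (fun j : Fin n => a i.castSucc j.castSucc)
      (Finset.mem_univ i)
    rw [Fin.sum_univ_castSucc] at h3
    have := hsum i.castSucc
    have := hpos i.castSucc (Fin.last n)
    omega
  intro h
  apply key
  have := Int.cast_det (R := ℝ) (L.submatrix Fin.castSucc Fin.castSucc)
  rw [h] at this
  simpa [Matrix.map] using this.symm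

theorem adjugate_last_last {n : ℕ} (L : Matrix (Fin (n + 1)) (Fin (n + 1)) ℤ) :
    L.adjugate (Fin.last n) (Fin.last n) = (L.submatrix Fin.castSucc Fin.castSucc).det := by
  rw [Matrix.adjugate_fin_succ_eq_det_submatrix, Fin.succAbove_last, Even.neg_one_pow ⟨_, rfl⟩,
    one_mul]

theorem vecMul_apply_eq {n : ℕ} {a : Fin (n + 1) → Fin (n + 1) → ℕ}
    {L : Matrix (Fin (n + 1)) (Fin (n + 1)) ℤ}
    (hL : ∀ i j, L i j = if i = j then (a i i : ℤ) else -(a i j : ℤ))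
    (w : Fin (n + 1) → ℤ) (j : Fin (n + 1)) :
    ∑ i, w i * L i j = w j * a j j - ∑ i ∈ Finset.univ.erase j, w i * a i j := by
  rw [← Finset.add_sum_erase _ _ (Finset.mem_univ j), sub_eq_add_neg, ← Finset.sum_neg_distrib]
  congr 1
  · simp [hL]
  · refine Finset.sum_congr rfl fun i hi => ?_
    simp [hL, Finset.ne_of_mem_erase hi]

/-- The left kernel of `L` has rank at most one: an element of it is determined by its last entry. -/
theorem eq_zero_of_last_eq_zero {n : ℕ} {L : Matrix (Fin (n + 1)) (Fin (n + 1)) ℤ}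
    (hdet : (L.submatrix Fin.castSucc Fin.castSucc).det ≠ 0)
    {w : Fin (n + 1) → ℤ} (hw : ∀ j, ∑ i, w i * L i j = 0) (hlast : w (Fin.last n) = 0) :
    w = 0 := by
  have h : (fun i : Fin n => w i.castSucc) = 0 := by
    refine Matrix.eq_zero_of_vecMul_eq_zero hdet (funext fun j => ?_)
    have := hw j.castSucc
    rw [Fin.sum_univ_castSucc, hlast] at this
    simpa [Matrix.vecMul, dotProduct] using this
  funext i
  refine Fin.lastCases hlast (fun i => congrFun h i) i

/-! ### Herzog ideals -/

theorem binomial_mem_herzog_iff {n : ℕ} (k : Type*) [Field k]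
    {a : Fin (n + 1) → Fin (n + 1) → ℕ}
    {L : Matrix (Fin (n + 1)) (Fin (n + 1)) ℤ}
    (hL : ∀ i j, L i j = if i = j then (a i i : ℤ) else -(a i j : ℤ))
    (v : Fin (n + 1) → ℕ) (j : Fin (n + 1)) :
    (X j ^ a j j - ∏ i ∈ Finset.univ.erase j, X i ^ a i j : MvPolynomial (Fin (n + 1)) k) ∈
      RingHom.ker (aeval (R := k) (fun i => (Polynomial.X : Polynomial k) ^ v i)) ↔
    ∑ i, (v i : ℤ) * L i j = 0 := by
  rw [vecMul_apply_eq hL, RingHom.mem_ker, map_sub, map_pow, map_prod, sub_eq_zero, sub_eq_zero]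
  simp only [map_pow, aeval_X, ← pow_mul, Finset.prod_pow_eq_pow_sum]
  constructor
  · intro h
    have := congrArg Polynomial.natDegree h
    simp only [Polynomial.natDegree_X_pow] at this
    exact_mod_cast this
  · intro h
    congr 1
    exact_mod_cast h

/-- Multiplying the exponents by `d` composes the parametrization with the injective map
`t ↦ t ^ d`. -/
theorem herzog_mul {n : ℕ} (k : Type*) [Field k] (v : Fin (n + 1) → ℕ) {d : ℕ} (hd : 0 < d) :
    RingHom.ker (aeval (R := k) (fun i => (Polynomial.X : Polynomial k) ^ (d * v i))) =
      RingHom.ker (aeval (R := k) (fun i => (Polynomial.X : Polynomial k) ^ v i)) := by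
  have h : aeval (R := k) (fun i => (Polynomial.X : Polynomial k) ^ (d * v i)) =
      (Polynomial.expand k d).comp
        (aeval (R := k) (fun i => (Polynomial.X : Polynomial k) ^ v i)) := by
    ext i : 1
    simp [pow_mul]
  ext g
  rw [h, RingHom.mem_ker, RingHom.mem_ker, AlgHom.comp_apply, Polynomial.expand_eq_zero hd]

/-! ### Binomials in the primes containing the PCB ideal -/

/-- Multiplicative relations with exponent vectors the columns of `L` imply the relation for every
integer combination of the columns. -/
theorem prod_zpow_mulVec {n : ℕ} {K : Type*} [Field K] {u : Fin (n + 1) → K}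
    (hu : ∀ i, u i ≠ 0) {L : Matrix (Fin (n + 1)) (Fin (n + 1)) ℤ}
    (h : ∀ j, ∏ i, u i ^ L i j = 1) (c : Fin (n + 1) → ℤ) :
    ∏ i, u i ^ (∑ j, L i j * c j) = 1 := by
  calc ∏ i, u i ^ (∑ j, L i j * c j) = ∏ i, ∏ j, (u i ^ L i j) ^ c j := by
        refine Finset.prod_congr rfl fun i _ => ?_
        simp only [← zpow_mul]
        generalize (Finset.univ : Finset (Fin (n + 1))) = s
        induction s using Finset.induction_on with
        | empty => simp
        | insert j s hj ih => rw [Finset.sum_insert hj, Finset.prod_insert hj, zpow_add₀ (hu i), ih]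
    _ = ∏ j, (∏ i, u i ^ L i j) ^ c j := by
        rw [Finset.prod_comm]
        simp only [Finset.prod_zpow]
    _ = 1 := by simp [h]

/-- If `m` is in the left kernel of `L` and `m_last` is the minor of `L` at the last position, then
`m_last e_i - m_i e_last` is an integer combination of the columns of `L`. The coefficients are the
`i`-th column of the adjugate of the minor, and `0` for the last column of `L`; the entry at `last`
is then forced by `m * L = 0`. -/
theorem exists_lattice_vector {n : ℕ} {L : Matrix (Fin (n + 1)) (Fin (n + 1)) ℤ}
    {m : Fin (n + 1) → ℤ}
    (hdet : (L.submatrix Fin.castSucc Fin.castSucc).det = m (Fin.last n))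
    (hm0 : m (Fin.last n) ≠ 0)
    (hmL : ∀ j, ∑ i, m i * L i j = 0) (i : Fin n) :
    ∃ c : Fin (n + 1) → ℤ,
      (∀ r : Fin n, ∑ j, L r.castSucc j * c j = if r = i then m (Fin.last n) else 0) ∧
      ∑ j, L (Fin.last n) j * c j = - m i.castSucc := by
  set M := L.submatrix Fin.castSucc Fin.castSucc with hM
  let c : Fin (n + 1) → ℤ := Fin.lastCases 0 (fun j => M.adjugate j i)
  have h1 : ∀ r : Fin n, ∑ j, L r.castSucc j * c j = if r = i then m (Fin.last n) else 0 := by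
    intro r
    have := congrFun (congrFun (Matrix.mul_adjugate M) r) i
    rw [hdet] at this
    rw [Fin.sum_univ_castSucc]
    simpa [c, Matrix.mul_apply, Matrix.smul_apply, Matrix.one_apply, hM] using this
  refine ⟨c, h1, ?_⟩
  have h2 : ∑ r, m r * ∑ j, L r j * c j = 0 := by
    simp only [Finset.mul_sum, ← mul_assoc]
    rw [Finset.sum_comm]
    simp only [← Finset.sum_mul, hmL, zero_mul, Finset.sum_const_zero]
  rw [Fin.sum_univ_castSucc] at h2
  simp only [h1, mul_ite, mul_zero, Finset.sum_ite_eq', Finset.mem_univ, if_true] at h2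
  apply mul_left_cancel₀ hm0
  linarith

/-- A prime containing all the `f j` contains `x_i ^ m_last - x_last ^ m_i` for every `i`. -/
theorem binomial_mem_of_prime {n : ℕ} (k : Type*) [Field k]
    {a : Fin (n + 1) → Fin (n + 1) → ℕ} (hpos : ∀ i j, 0 < a i j)
    {L : Matrix (Fin (n + 1)) (Fin (n + 1)) ℤ}
    (hL : ∀ i j, L i j = if i = j then (a i i : ℤ) else -(a i j : ℤ))
    {m : Fin (n + 1) → ℕ} (hmpos : ∀ i, 0 < m i)
    (hdet : (L.submatrix Fin.castSucc Fin.castSucc).det = m (Fin.last n))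
    (hmL : ∀ j, ∑ i, (m i : ℤ) * L i j = 0)
    {q : Ideal (MvPolynomial (Fin (n + 1)) k)} [hq : q.IsPrime]
    (hfq : ∀ j, X j ^ a j j - ∏ i ∈ Finset.univ.erase j, X i ^ a i j ∈ q) (i : Fin n) :
    X i.castSucc ^ m (Fin.last n) - X (Fin.last n) ^ m i.castSucc ∈ q := by
  by_cases hx : ∃ s, X s ∈ q
  -- one variable in `q` divides the monomial of every other `f j`, so all variables lie in `q`
  · obtain ⟨s, hs⟩ := hx
    have hall : ∀ j, X j ∈ q := by
      intro j
      by_cases hjs : s = j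
      · exact hjs ▸ hs
      · have hprod : ∏ i ∈ Finset.univ.erase j, X i ^ a i j ∈ q :=
          Ideal.mem_of_dvd q (Finset.dvd_prod_of_mem (fun i => X i ^ a i j)
            (Finset.mem_erase.2 ⟨hjs, Finset.mem_univ s⟩))
            (Ideal.pow_mem_of_mem q hs _ (hpos s j))
        exact hq.mem_of_pow_mem _ (by simpa using q.add_mem (hfq j) hprod)
    exact q.sub_mem (Ideal.pow_mem_of_mem q (hall _) _ (hmpos _))
      (Ideal.pow_mem_of_mem q (hall _) _ (hmpos _))
  · push Not at hx
    let φ : MvPolynomial (Fin (n + 1)) k →+* FractionRing (MvPolynomial (Fin (n + 1)) k ⧸ q) :=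
      (algebraMap _ _).comp (Ideal.Quotient.mk q)
    have hφ : ∀ g, φ g = 0 ↔ g ∈ q := by
      intro g
      rw [RingHom.comp_apply, FaithfulSMul.algebraMap_eq_zero_iff, Ideal.Quotient.eq_zero_iff_mem]
    have hu : ∀ j, φ (X j) ≠ 0 := fun j h => hx j ((hφ _).1 h)
    have hone : ∀ j, ∏ i, φ (X i) ^ L i j = 1 := by
      intro j
      have h := (hφ _).2 (hfq j)
      rw [map_sub, sub_eq_zero, map_pow, map_prod] at h
      rw [← Finset.mul_prod_erase _ _ (Finset.mem_univ j)]
      have h1 : ∏ i ∈ Finset.univ.erase j, φ (X i) ^ L i j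
          = (∏ i ∈ Finset.univ.erase j, φ (X i ^ a i j))⁻¹ := by
        rw [← Finset.prod_inv_distrib]
        refine Finset.prod_congr rfl fun i hi => ?_
        rw [hL, if_neg (Finset.ne_of_mem_erase hi), zpow_neg, zpow_natCast, map_pow]
      rw [h1, ← h, hL, if_pos rfl, zpow_natCast]
      exact mul_inv_cancel₀ (pow_ne_zero _ (hu j))
    obtain ⟨c, hc1, hc2⟩ := exists_lattice_vector (m := fun i => (m i : ℤ)) hdet
      (by exact_mod_cast (hmpos _).ne') hmL i
    have h := prod_zpow_mulVec hu hone c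
    rw [Fin.prod_univ_castSucc, hc2, Finset.prod_eq_single i (fun r _ hr => by simp [hc1, hr])
      (by simp), hc1, if_pos rfl, zpow_neg, zpow_natCast, zpow_natCast] at h
    rw [← hφ, map_sub, map_pow, map_pow, sub_eq_zero]
    exact (mul_inv_eq_one₀ (pow_ne_zero _ (hu _))).1 h

/-- The Herzog ideal is strictly contained in the prime `(x_0, …, x_n)`, whose height is at most
`dim A = n + 1`. -/
theorem herzog_height_le {n : ℕ} (k : Type*) [Field k] {m : Fin (n + 1) → ℕ}
    (hm : ∀ i, 0 < m i) {P : Ideal (MvPolynomial (Fin (n + 1)) k)} [P.IsPrime]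
    (hP : P = RingHom.ker (aeval (R := k) (fun i => (Polynomial.X : Polynomial k) ^ m i))) :
    P.height ≤ n := by
  let Q : Ideal (MvPolynomial (Fin (n + 1)) k) :=
    RingHom.ker (aeval (R := k) (fun _ => (0 : k)) : MvPolynomial (Fin (n + 1)) k →ₐ[k] k)
  have hQ : Q.IsPrime := RingHom.ker_isPrime _
  have hcomp : (Polynomial.aeval (R := k) (0 : k)).comp
      (aeval (R := k) (fun i => (Polynomial.X : Polynomial k) ^ m i)) =
      (aeval (R := k) (fun _ => (0 : k)) : MvPolynomial (Fin (n + 1)) k →ₐ[k] k) := by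
    ext i
    simp [(hm i).ne']
  have hlt : P < Q := by
    refine lt_of_le_of_ne (fun g hg => ?_) fun h => ?_
    · rw [hP, RingHom.mem_ker] at hg
      rw [RingHom.mem_ker, ← hcomp, AlgHom.comp_apply, hg, map_zero]
    · have : X 0 ∈ P := by rw [h, RingHom.mem_ker, aeval_X]
      rw [hP, RingHom.mem_ker, aeval_X] at this
      exact pow_ne_zero _ Polynomial.X_ne_zero this
  have h1 := Ideal.height_add_one_le_of_lt_of_isPrime hlt
  have h2 := Ideal.height_le_ringKrullDim_of_ne_top hQ.ne_top
  rw [MvPolynomial.ringKrullDim_of_isNoetherianRing, ringKrullDim_eq_zero_of_field, zero_add,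
    Nat.card_fin] at h2
  have h3 : Q.height ≤ ((n + 1 : ℕ) : ℕ∞) := by exact_mod_cast h2
  have h4 := h1.trans h3
  push_cast at h4
  exact (ENat.add_le_add_iff_right ENat.one_ne_top).1 h4

/-- Let `I` be the PCB ideal in `A = k[x_0, …, x_n]` associated to an
`(n+1)×(n+1)` PCB matrix `L`, and let `m` be the last row of `adj(L)` (its entries are
positive integers).  For `u : Fin (n+1) → ℕ` the Herzog ideal `𝔭_u` is the kernel of the
`k`-algebra map `A → k[t]`, `x_i ↦ t^{u i}`.  Then `I ⊆ 𝔭_m`; any Herzog ideal `𝔭_v`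
(with `v` having positive entries) containing `I` equals `𝔭_m`; `𝔭_m` is a minimal prime
of `I`; and the height of `I` (the infimum of the heights of the primes containing `I`)
equals `n` (that is, size minus one). -/
theorem stmt4 {n : ℕ} (hn : 1 ≤ n) (k : Type*) [Field k]
    (a : Fin (n + 1) → Fin (n + 1) → ℕ) (hpos : ∀ i j, 0 < a i j)
    (hsum : ∀ i, a i i = ∑ j ∈ Finset.univ.erase i, a i j)
    (L : Matrix (Fin (n + 1)) (Fin (n + 1)) ℤ)
    (hL : ∀ i j, L i j = if i = j then (a i i : ℤ) else -(a i j : ℤ))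
    (f : Fin (n + 1) → MvPolynomial (Fin (n + 1)) k)
    (hf : ∀ j, f j = X j ^ a j j - ∏ i ∈ Finset.univ.erase j, X i ^ a i j)
    (I : Ideal (MvPolynomial (Fin (n + 1)) k)) (hI : I = Ideal.span (Set.range f))
    (m : Fin (n + 1) → ℕ) (hm : ∀ i, (m i : ℤ) = L.adjugate (Fin.last n) i)
    (p : (Fin (n + 1) → ℕ) → Ideal (MvPolynomial (Fin (n + 1)) k))
    (hp : ∀ u, p u = RingHom.ker
      (MvPolynomial.aeval (R := k) (fun i => (Polynomial.X : Polynomial k) ^ u i))) :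
    I ≤ p m ∧
      (∀ v : Fin (n + 1) → ℕ, (∀ i, 0 < v i) → I ≤ p v → p v = p m) ∧
      p m ∈ I.minimalPrimes ∧
      ⨅ (q : PrimeSpectrum (MvPolynomial (Fin (n + 1)) k)) (_ : I ≤ q.asIdeal),
        Order.height q = (n : ℕ∞) := by
  have hdet0 := det_minor_ne_zero hpos hsum hL
  have hdet : (L.submatrix Fin.castSucc Fin.castSucc).det = m (Fin.last n) := by
    rw [hm, adjugate_last_last]
  have hlast : m (Fin.last n) ≠ 0 := by
    rw [hdet] at hdet0
    exact_mod_cast hdet0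
  -- the rows of `L` sum to zero, so `L` is singular and `adj(L) * L = 0`
  have hLdet : L.det = 0 := by
    refine Matrix.exists_mulVec_eq_zero_iff.1 ⟨fun _ => 1, fun h => ?_, funext fun i => ?_⟩
    · simpa using congrFun h 0
    · have h1 : ∀ j ∈ Finset.univ.erase i, L i j = -(a i j : ℤ) := fun j hj => by
        rw [hL, if_neg (Finset.ne_of_mem_erase hj).symm]
      simp only [Matrix.mulVec, dotProduct, mul_one, Pi.zero_apply]
      rw [← Finset.add_sum_erase _ _ (Finset.mem_univ i), Finset.sum_congr rfl h1, hL, if_pos rfl,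
        hsum i, Finset.sum_neg_distrib]
      push_cast
      ring
  have hmL : ∀ j, ∑ i, (m i : ℤ) * L i j = 0 := by
    intro j
    have := congrFun (congrFun (Matrix.adjugate_mul L) (Fin.last n)) j
    rw [hLdet, zero_smul] at this
    simpa [Matrix.mul_apply, hm] using this
  have hmpos : ∀ i, 0 < m i := by
    intro j
    by_cases hj : j = Fin.last n
    · exact hj ▸ Nat.pos_of_ne_zero hlast
    · have h := hmL j
      rw [vecMul_apply_eq hL, sub_eq_zero] at h
      have h' : m j * a j j = ∑ i ∈ Finset.univ.erase j, m i * a i j := by exact_mod_cast h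
      have h'' : 0 < m j * a j j := by
        rw [h']
        exact Finset.sum_pos' (fun _ _ => Nat.zero_le _) ⟨Fin.last n,
          Finset.mem_erase.2 ⟨Ne.symm hj, Finset.mem_univ _⟩,
          Nat.mul_pos (Nat.pos_of_ne_zero hlast) (hpos _ _)⟩
      exact Nat.pos_of_mul_pos_right h''
  have hle : ∀ v, I ≤ p v ↔ ∀ j, ∑ i, (v i : ℤ) * L i j = 0 := by
    intro v
    rw [hI, Ideal.span_le, Set.range_subset_iff]
    refine forall_congr' fun j => ?_
    rw [hp, hf, SetLike.mem_coe, binomial_mem_herzog_iff k hL]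
  have hIm : I ≤ p m := (hle m).2 hmL
  have hprime : (p m).IsPrime := by
    rw [hp]
    exact RingHom.ker_isPrime _
  have hupper : (p m).height ≤ n := herzog_height_le k hmpos (hp m)
  have hlower : ∀ q : Ideal (MvPolynomial (Fin (n + 1)) k), q.IsPrime → I ≤ q →
      (n : ℕ∞) ≤ q.height := fun q hq hIq =>
    le_height_of_binomials_mem hlast n (fun i => m i.castSucc) q
      (binomial_mem_of_prime k hpos hL hmpos hdet hmL fun j =>
        hf j ▸ hIq (hI ▸ Ideal.subset_span ⟨j, rfl⟩))
  refine ⟨hIm, fun v hv hIv => ?_, ⟨⟨hprime, hIm⟩, fun q hq hqm => ?_⟩, le_antisymm ?_ ?_⟩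
  -- the left kernel of `L` is a line, hence `m_last • v = v_last • m`
  · have hw := eq_zero_of_last_eq_zero hdet0
      (w := fun i => (m (Fin.last n) : ℤ) * v i - v (Fin.last n) * m i)
      (fun j => by
        simp only [sub_mul, mul_assoc, Finset.sum_sub_distrib, ← Finset.mul_sum, hmL,
          (hle v).1 hIv, mul_zero, sub_zero]) (by ring)
    have hprop : (fun i => m (Fin.last n) * v i) = fun i => v (Fin.last n) * m i := by
      funext i
      have := congrFun hw i
      simp only [Pi.zero_apply, sub_eq_zero] at this
      exact_mod_cast this
    rw [hp v, hp m, ← herzog_mul k v (hmpos (Fin.last n)), ← herzog_mul k m (hv (Fin.last n))]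
    have h' : ∀ i, m (Fin.last n) * v i = v (Fin.last n) * m i := congrFun hprop
    simp only [h']
  · by_contra hne
    have := hq.1
    have h1 := Ideal.height_add_one_le_of_lt_of_isPrime (lt_of_le_not_ge hqm hne)
    have h2 : ((n + 1 : ℕ) : ℕ∞) ≤ n := by
      push_cast
      exact (add_le_add_left (hlower q hq.1 hq.2) 1).trans (h1.trans hupper)
    exact absurd (Nat.cast_le.1 h2) (by omega)
  · refine (iInf₂_le (⟨p m, hprime⟩ : PrimeSpectrum (MvPolynomial (Fin (n + 1)) k)) hIm).trans ?_
    rw [← PrimeSpectrum.height_eq_orderHeight]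
    exact hupper
  · refine le_iInf₂ fun q hq => ?_
    rw [← PrimeSpectrum.height_eq_orderHeight]
    exact hlower q.asIdeal q.isPrime hq
end

section
/- If n ≥ 3, then f_1,…,f_n is a minimal system of generators of the PCB ideal I (no proper subset of {f_1,…,f_n} generates I), and every system of generators of I has at least n elements; in particular I cannot be generated by n−1 elements. -/
open MvPolynomial

/-!
For each `j`, restrict polynomials to the `j`-th coordinate axis by setting all variables other
than `x_j` to `0`.  As there are at least three variables, the monomial `∏_{i ≠ l} x_i ^ a i l`
always involves a variable other than `x_j`; hence `f_l` restricts to `0` for `l ≠ j`, while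
`f_j` restricts to `x_j ^ a j j`.  The restriction of any `p ∈ I` is therefore divisible by
`x_j ^ a j j`, so the functional `λ_j` reading off the coefficient of `x_j ^ a j j` satisfies
`λ_j (g p) = g(0) λ_j p` on `I`.

Together the `λ_j` form a map `Λ : A → k ^ (n + 1)` sending `f_l` to the `l`-th standard basis
vector, and the `Λ`-image of any generating set of `I` spans `k ^ (n + 1)` over `k`
(this is the statement `dim I / 𝔪 I ≥ n + 1` in coordinates).  Both claims follow by counting.
-/

/-- Restriction of a polynomial to the `j`-th coordinate axis: `x_j ↦ X` and `x_i ↦ 0` for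
`i ≠ j`. -/
noncomputable def axisRestrict {n : ℕ} (k : Type*) [Field k] (j : Fin (n + 1)) :
    MvPolynomial (Fin (n + 1)) k →ₐ[k] Polynomial k :=
  aeval (fun i => if i = j then Polynomial.X else 0)

/-- The `k`-linear map whose `j`-th coordinate is the coefficient of the pure power
`x_j ^ a j j`, read off after restriction to the `j`-th axis. -/
noncomputable def purePowerCoeff {n : ℕ} (k : Type*) [Field k]
    (a : Fin (n + 1) → Fin (n + 1) → ℕ) :
    MvPolynomial (Fin (n + 1)) k →ₗ[k] (Fin (n + 1) → k) :=
  LinearMap.pi fun j => (Polynomial.lcoeff k (a j j)).comp (axisRestrict k j).toLinearMap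

lemma purePowerCoeff_apply {n : ℕ} {k : Type*} [Field k] (a : Fin (n + 1) → Fin (n + 1) → ℕ)
    (p : MvPolynomial (Fin (n + 1)) k) (j : Fin (n + 1)) :
    purePowerCoeff k a p j = (axisRestrict k j p).coeff (a j j) := rfl

lemma coeff_zero_axisRestrict {n : ℕ} {k : Type*} [Field k] (j : Fin (n + 1))
    (g : MvPolynomial (Fin (n + 1)) k) :
    (axisRestrict k j g).coeff 0 = constantCoeff g := by
  have h : (Polynomial.constantCoeff.comp (axisRestrict k j).toRingHom) =
      (constantCoeff : MvPolynomial (Fin (n + 1)) k →+* k) := by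
    ext i
    · simp [axisRestrict]
    · by_cases hij : i = j <;> simp [axisRestrict, hij]
  exact congrArg (fun φ => φ g) h

/-- With at least three variables, only `f_j` survives on the `j`-th axis. -/
lemma axisRestrict_binomial {n : ℕ} (hn : 2 ≤ n) {k : Type*} [Field k]
    (a : Fin (n + 1) → Fin (n + 1) → ℕ) (hpos : ∀ i j, 0 < a i j) (j l : Fin (n + 1)) :
    axisRestrict k j (X l ^ a l l - ∏ i ∈ Finset.univ.erase l, X i ^ a i l) =
      if l = j then Polynomial.X ^ a j j else 0 := by
  -- an index different from both `j` and `l`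
  obtain ⟨m, hm⟩ : ∃ m, m ∉ ({j, l} : Finset (Fin (n + 1))) := by
    by_contra! h
    have h1 : (Finset.univ : Finset (Fin (n + 1))).card ≤ ({j, l} : Finset _).card :=
      Finset.card_le_card fun m _ => h m
    have h2 := Finset.card_le_two (a := j) (b := l)
    simp only [Finset.card_univ, Fintype.card_fin] at h1
    omega
  simp only [Finset.mem_insert, Finset.mem_singleton, not_or] at hm
  have hprod : axisRestrict k j (∏ i ∈ Finset.univ.erase l, X i ^ a i l) = 0 := by
    rw [map_prod]
    refine Finset.prod_eq_zero (i := m) (by simp [hm.2]) ?_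
    simp [axisRestrict, hm.1, (hpos m l).ne']
  rw [map_sub, hprod, sub_zero]
  by_cases hl : l = j
  · subst hl; simp [axisRestrict]
  · simp [axisRestrict, hl, (hpos l l).ne']

/-- Every element of the ideal restricts to a multiple of `X ^ a j j` on the `j`-th axis, so
multiplication by `g` acts on the pure-power coefficients through the constant term of `g`. -/
lemma purePowerCoeff_mul {n : ℕ} {k : Type*} [Field k]
    (a : Fin (n + 1) → Fin (n + 1) → ℕ) (f : Fin (n + 1) → MvPolynomial (Fin (n + 1)) k)
    (hf : ∀ j l, axisRestrict k j (f l) = if l = j then Polynomial.X ^ a j j else 0)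
    (g p : MvPolynomial (Fin (n + 1)) k) (hp : p ∈ Ideal.span (Set.range f)) :
    purePowerCoeff k a (g * p) = constantCoeff g • purePowerCoeff k a p := by
  funext j
  have hle : Ideal.span (Set.range f) ≤
      (Ideal.span {(Polynomial.X : Polynomial k) ^ a j j}).comap (axisRestrict k j) := by
    rw [Ideal.span_le]
    rintro _ ⟨l, rfl⟩
    rw [SetLike.mem_coe, Ideal.mem_comap, Ideal.mem_span_singleton, hf]
    split_ifs <;> simp
  obtain ⟨q, hq⟩ := Ideal.mem_span_singleton.1 (Ideal.mem_comap.1 (hle hp))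
  have hX : ∀ r : Polynomial k, (r * Polynomial.X ^ a j j).coeff (a j j) = r.coeff 0 := by
    intro r
    simpa using Polynomial.coeff_mul_X_pow r (a j j) 0
  rw [Pi.smul_apply, purePowerCoeff_apply, purePowerCoeff_apply, map_mul, hq, mul_comm _ q,
    ← mul_assoc, hX, hX, Polynomial.mul_coeff_zero, coeff_zero_axisRestrict, smul_eq_mul]

/-- A generating set of the ideal has at least `n + 1` elements, since its image under
`purePowerCoeff` spans `k ^ (n + 1)`. -/
lemma le_card_of_span_eq {n : ℕ} {k : Type*} [Field k]
    (a : Fin (n + 1) → Fin (n + 1) → ℕ) (f : Fin (n + 1) → MvPolynomial (Fin (n + 1)) k)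
    (hf : ∀ j l, axisRestrict k j (f l) = if l = j then Polynomial.X ^ a j j else 0)
    (s : Finset (MvPolynomial (Fin (n + 1)) k))
    (hs : Ideal.span (s : Set (MvPolynomial (Fin (n + 1)) k)) = Ideal.span (Set.range f)) :
    n + 1 ≤ s.card := by
  classical
  have hmem : ∀ p ∈ Ideal.span (s : Set (MvPolynomial (Fin (n + 1)) k)),
      purePowerCoeff k a p ∈
        Submodule.span k (↑(s.image (purePowerCoeff k a)) : Set (Fin (n + 1) → k)) := by
    intro p hp
    induction hp using Submodule.span_induction with
    | mem x hx => exact Submodule.subset_span (by simpa using ⟨x, hx, rfl⟩)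
    | zero => simp
    | add x y _ _ hx hy => rw [map_add]; exact add_mem hx hy
    | smul g x hx ih =>
      rw [smul_eq_mul, purePowerCoeff_mul a f hf g x (hs ▸ hx)]
      exact Submodule.smul_mem _ _ ih
  have hbasis : ∀ l, purePowerCoeff k a (f l) = Pi.basisFun k (Fin (n + 1)) l := by
    intro l
    funext j
    rw [purePowerCoeff_apply, hf, Pi.basisFun_apply, Pi.single_apply]
    by_cases h : l = j
    · simp [h]
    · simp [h, Ne.symm h]
  have htop : Submodule.span k (↑(s.image (purePowerCoeff k a)) : Set (Fin (n + 1) → k)) = ⊤ := by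
    rw [eq_top_iff, ← (Pi.basisFun k (Fin (n + 1))).span_eq, Submodule.span_le]
    rintro _ ⟨l, rfl⟩
    rw [← hbasis]
    exact hmem _ (hs ▸ Ideal.subset_span ⟨l, rfl⟩)
  have hcard := finrank_span_finset_le_card (R := k) (s.image (purePowerCoeff k a))
  rw [Set.finrank, htop, finrank_top, Module.finrank_fin_fun] at hcard
  exact hcard.trans Finset.card_image_le

/-- Suppose the number of variables `n + 1` is at least `3`
(i.e. `2 ≤ n`).  Then `f 0, …, f n` is a minimal system of generators of the PCB ideal
`I`: no proper subset of `{f 0, …, f n}` generates `I`, and every (finite) system of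
generators of `I` has at least `n + 1` elements; in particular `I` cannot be generated
by `n` elements. -/
theorem stmt5 {n : ℕ} (hn : 2 ≤ n) (k : Type*) [Field k]
    (a : Fin (n + 1) → Fin (n + 1) → ℕ) (hpos : ∀ i j, 0 < a i j)
    (hsum : ∀ i, a i i = ∑ j ∈ Finset.univ.erase i, a i j)
    (f : Fin (n + 1) → MvPolynomial (Fin (n + 1)) k)
    (hf : ∀ j, f j = X j ^ a j j - ∏ i ∈ Finset.univ.erase j, X i ^ a i j)
    (I : Ideal (MvPolynomial (Fin (n + 1)) k)) (hI : I = Ideal.span (Set.range f)) :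
    (∀ s : Finset (Fin (n + 1)), Ideal.span (f '' ↑s) = I → s = Finset.univ) ∧
      (∀ s : Finset (MvPolynomial (Fin (n + 1)) k),
        Ideal.span (↑s : Set (MvPolynomial (Fin (n + 1)) k)) = I → n + 1 ≤ s.card) := by
  classical
  subst hI
  have hf' : ∀ j l, axisRestrict k j (f l) = if l = j then Polynomial.X ^ a j j else 0 := by
    intro j l
    rw [hf]
    exact axisRestrict_binomial hn a hpos j l
  refine ⟨fun s hs => ?_, fun s hs => le_card_of_span_eq a f hf' s hs⟩
  have h := le_card_of_span_eq a f hf' (s.image f) (by rw [Finset.coe_image, hs])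
  rw [← Finset.card_eq_iff_eq_univ, Fintype.card_fin]
  exact le_antisymm (by simpa using Finset.card_le_univ s) (h.trans Finset.card_image_le)
end

section
/- Every associated prime 𝔭 of the PCB ideal I satisfies exactly one of the following: either 𝔭 has height n−1 and x_i ∉ 𝔭 for all i = 1,…,n, or 𝔭 = 𝔪 = (x_1,…,x_n). -/
/-!
Let `L` be the PCB matrix and `p` an associated prime of `I`, say `p = (I : g)` with `g ∉ I`.

If some `x_i` lies in `p`, then for every `j ≠ i` the monomial of `f_j` is divisible by `x_i`, so
`x_j ∈ p`; hence `𝔪 ⊆ p`. The reverse inclusion holds for every associated prime: `L` has a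
strictly positive left kernel vector `w` (`exists_weights`), so `I` is homogeneous for the positive
grading `deg x_i = w_i`, and a polynomial with nonzero constant term is a nonzerodivisor modulo `I`
(`mem_of_mul_mem`).

If no `x_i` lies in `p`, then `p ⊊ 𝔪`, so the height of `p` is at most `n` because the polynomial
ring has dimension `n + 1`. For the lower bound, the columns of `L` span a finite-index sublattice
of the orthogonal complement of `w` (`exists_mulVec_eq_smul`). Since the `x_i` are nonzero in the
fraction field of `A ⧸ p`, this gives relations `x_i ^ N = x_0 ^ M` modulo `p` with `N > 0`
(`exists_pow_eq_pow`), and these make the chain of extensions to `A` of the contractions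
`p ∩ k[x_0, …, x_j]` strictly increasing (`le_height_of_pow_eq`).
-/

open MvPolynomial

/-! ### The PCB matrix -/

/-- The PCB matrix of `a`, over `ℤ`: diagonal entries `a i i`, off-diagonal entries
`-a i j`. -/
def pcbMatrix {ι : Type*} [DecidableEq ι] (a : ι → ι → ℕ) : Matrix ι ι ℤ :=
  Matrix.of fun i j => if i = j then (a i j : ℤ) else -(a i j : ℤ)

section Matrix

variable {ι : Type*} [Fintype ι] [DecidableEq ι] {a : ι → ι → ℕ}

lemma pcbMatrix_mulVec (hsum : ∀ i, a i i = ∑ j ∈ Finset.univ.erase i, a i j)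
    (u : ι → ℤ) (i : ι) :
    (pcbMatrix a).mulVec u i = ∑ j ∈ Finset.univ.erase i, (a i j : ℤ) * (u i - u j) := by
  simp only [Matrix.mulVec, dotProduct, pcbMatrix, Matrix.of_apply]
  rw [← Finset.add_sum_erase _ _ (Finset.mem_univ i)]
  have h : ∀ j ∈ Finset.univ.erase i,
      (if i = j then (a i j : ℤ) else -(a i j : ℤ)) * u j = -((a i j : ℤ) * u j) := by
    intro j hj
    rw [if_neg (Finset.ne_of_mem_erase hj).symm]; ring
  rw [Finset.sum_congr rfl h, if_pos rfl, hsum i]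
  simp only [mul_sub, Finset.sum_sub_distrib, Finset.sum_neg_distrib, Nat.cast_sum,
    Finset.sum_mul]
  ring

lemma vecMul_pcbMatrix (w : ι → ℤ) (j : ι) :
    Matrix.vecMul w (pcbMatrix a) j
      = w j * a j j - ∑ i ∈ Finset.univ.erase j, w i * (a i j : ℤ) := by
  simp only [Matrix.vecMul, dotProduct, pcbMatrix, Matrix.of_apply]
  rw [← Finset.add_sum_erase _ _ (Finset.mem_univ j)]
  have h : ∀ i ∈ Finset.univ.erase j,
      w i * (if i = j then (a i j : ℤ) else -(a i j : ℤ)) = -(w i * (a i j : ℤ)) := by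
    intro i hi
    rw [if_neg (Finset.ne_of_mem_erase hi)]; ring
  rw [Finset.sum_congr rfl h, if_pos rfl, Finset.sum_neg_distrib, sub_eq_add_neg]

/-- The discrete maximum principle: the right kernel of the PCB matrix consists of constant
vectors. -/
lemma pcbMatrix_ker (hpos : ∀ i j, 0 < a i j)
    (hsum : ∀ i, a i i = ∑ j ∈ Finset.univ.erase i, a i j) (u : ι → ℤ)
    (hu : (pcbMatrix a).mulVec u = 0) (i j : ι) : u i = u j := by
  have : Nonempty ι := ⟨i⟩
  obtain ⟨m, hm⟩ := Finite.exists_max u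
  have key : ∀ l, u l = u m := by
    intro l
    by_cases hl : l = m
    · rw [hl]
    have h := congrFun hu m
    rw [pcbMatrix_mulVec hsum, Pi.zero_apply, Finset.sum_eq_zero_iff_of_nonneg
      (fun x _ => mul_nonneg (Int.natCast_nonneg _) (sub_nonneg.2 (hm x)))] at h
    have := h l (Finset.mem_erase.2 ⟨hl, Finset.mem_univ _⟩)
    have hp := hpos m l
    rcases mul_eq_zero.1 this with h1 | h1
    · omega
    · omega
  rw [key i, key j]

/-- A strictly positive integer vector in the left kernel: the absolute values of any nonzero
left kernel vector are again in the left kernel, as summing the triangle inequalities over all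
columns gives an equality. -/
lemma exists_weights [Nonempty ι] (hpos : ∀ i j, 0 < a i j)
    (hsum : ∀ i, a i i = ∑ j ∈ Finset.univ.erase i, a i j) :
    ∃ w : ι → ℕ, (∀ i, 0 < w i) ∧
      ∀ j, w j * a j j = ∑ i ∈ Finset.univ.erase j, w i * a i j := by
  have hdet : (pcbMatrix a).det = 0 := by
    refine Matrix.exists_mulVec_eq_zero_iff.1 ⟨fun _ => 1, ?_, ?_⟩
    · intro h
      exact one_ne_zero (congrFun h (Classical.arbitrary ι))
    · ext i
      rw [pcbMatrix_mulVec hsum]; simp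
  obtain ⟨v, hv0, hv⟩ := Matrix.exists_vecMul_eq_zero_iff.2 hdet
  have hv' : ∀ j, v j * a j j = ∑ i ∈ Finset.univ.erase j, v i * (a i j : ℤ) := by
    intro j
    have := congrFun hv j
    rw [vecMul_pcbMatrix] at this
    exact sub_eq_zero.1 this
  have hle : ∀ j ∈ Finset.univ, (v j).natAbs * a j j
      ≤ ∑ i ∈ Finset.univ.erase j, (v i).natAbs * a i j := by
    intro j _
    have h1 : (v j).natAbs * a j j = (v j * a j j).natAbs := by simp [Int.natAbs_mul]
    rw [h1, hv' j]
    refine (Int.natAbs_sum_le _ _).trans (le_of_eq ?_)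
    simp [Int.natAbs_mul]
  have htot : ∑ j, (v j).natAbs * a j j
      = ∑ j, ∑ i ∈ Finset.univ.erase j, (v i).natAbs * a i j := by
    rw [Finset.sum_comm' (t' := Finset.univ) (s' := fun i => Finset.univ.erase i)
      (by intro x y; simp [eq_comm])]
    refine Finset.sum_congr rfl fun j _ => ?_
    conv_lhs => rw [hsum j]
    rw [Finset.mul_sum]
  have heq : ∀ j, (v j).natAbs * a j j
      = ∑ i ∈ Finset.univ.erase j, (v i).natAbs * a i j :=
    fun j => (Finset.sum_eq_sum_iff_of_le hle).1 htot j (Finset.mem_univ j)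
  obtain ⟨l, hl⟩ := Function.ne_iff.1 hv0
  refine ⟨fun i => (v i).natAbs, fun j => ?_, heq⟩
  by_cases hj : j = l
  · rw [hj]; exact Int.natAbs_pos.2 hl
  have h1 : 0 < (v l).natAbs * a l j := Nat.mul_pos (Int.natAbs_pos.2 hl) (hpos l j)
  have h2 : (v l).natAbs * a l j ≤ ∑ i ∈ Finset.univ.erase j, (v i).natAbs * a i j :=
    Finset.single_le_sum (f := fun i => (v i).natAbs * a i j) (fun _ _ => Nat.zero_le _)
      (Finset.mem_erase.2 ⟨Ne.symm hj, Finset.mem_univ l⟩)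
  rw [← heq j] at h2
  exact Nat.pos_of_mul_pos_right (h1.trans_le h2)

/-- The column lattice of the PCB matrix has finite index in the orthogonal complement of the
weight vector `w`. The matrix `M = L + 𝟙 wᵀ` is nonsingular, and if `w ⬝ v = 0` then
`u = adj(M) v` also satisfies `w ⬝ u = 0`, so `L u = M u = det(M) v`. -/
lemma exists_mulVec_eq_smul [Nonempty ι] (hpos : ∀ i j, 0 < a i j)
    (hsum : ∀ i, a i i = ∑ j ∈ Finset.univ.erase i, a i j)
    (w : ι → ℕ) (hw : ∀ i, 0 < w i)
    (hwa : ∀ j, w j * a j j = ∑ i ∈ Finset.univ.erase j, w i * a i j) :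
    ∃ c : ℕ, 0 < c ∧ ∀ v : ι → ℤ, ∑ i, (w i : ℤ) * v i = 0 →
      ∃ u : ι → ℤ, (pcbMatrix a).mulVec u = (c : ℤ) • v := by
  classical
  set L := pcbMatrix a
  set W : ι → ℤ := fun i => (w i : ℤ) with hW
  have hWL : Matrix.vecMul W L = 0 := by
    ext j
    rw [vecMul_pcbMatrix, Pi.zero_apply, sub_eq_zero]
    simp only [hW]
    exact_mod_cast hwa j
  have hS : (0 : ℤ) < ∑ i, W i :=
    Finset.sum_pos (fun i _ => Int.natCast_pos.2 (hw i)) Finset.univ_nonempty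
  let M : Matrix ι ι ℤ := L + Matrix.vecMulVec (fun _ => 1) W
  have hM : ∀ u, M.mulVec u = L.mulVec u + fun _ => W ⬝ᵥ u := by
    intro u
    simp only [M, Matrix.add_mulVec]
    congr 1
    ext i
    simp [Matrix.mulVec, Matrix.vecMulVec, dotProduct]
  have hWM : ∀ u, W ⬝ᵥ M.mulVec u = (∑ i, W i) * (W ⬝ᵥ u) := by
    intro u
    rw [hM, dotProduct_add, Matrix.dotProduct_mulVec, hWL, zero_dotProduct, zero_add]
    simp only [dotProduct]
    rw [← Finset.sum_mul]
  have hdet : M.det ≠ 0 := by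
    intro h0
    obtain ⟨u, hu0, hu⟩ := Matrix.exists_mulVec_eq_zero_iff.2 h0
    have h1 : W ⬝ᵥ u = 0 := by
      have := hWM u
      rw [hu, dotProduct_zero] at this
      exact (mul_eq_zero.1 this.symm).resolve_left hS.ne'
    have h2 : L.mulVec u = 0 := by
      have := hM u
      rw [hu, h1] at this
      ext i; have := congrFun this i; simpa using this.symm
    apply hu0
    ext i
    have h3 : W ⬝ᵥ u = (∑ j, W j) * u i := by
      rw [dotProduct, Finset.sum_mul]
      exact Finset.sum_congr rfl fun j _ => by rw [pcbMatrix_ker hpos hsum u h2 j i]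
    rw [h1] at h3
    exact (mul_eq_zero.1 h3.symm).resolve_left hS.ne'
  refine ⟨M.det.natAbs, Int.natAbs_pos.2 hdet, fun v hv => ?_⟩
  have hdet_smul : ∃ u : ι → ℤ, L.mulVec u = M.det • v := by
    refine ⟨M.adjugate.mulVec v, ?_⟩
    have h1 : M.mulVec (M.adjugate.mulVec v) = M.det • v := by
      rw [Matrix.mulVec_mulVec, Matrix.mul_adjugate, Matrix.smul_mulVec, Matrix.one_mulVec]
    have h2 : W ⬝ᵥ M.adjugate.mulVec v = 0 := by
      have := hWM (M.adjugate.mulVec v)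
      rw [h1, dotProduct_smul, show W ⬝ᵥ v = 0 from hv, smul_zero] at this
      exact (mul_eq_zero.1 this.symm).resolve_left hS.ne'
    rw [← h1, hM, h2]
    ext i; simp
  obtain ⟨u, hu⟩ := hdet_smul
  rcases Int.natAbs_eq M.det with h | h
  · exact ⟨u, by rw [hu, ← h]⟩
  · refine ⟨-u, ?_⟩
    rw [Matrix.mulVec_neg, hu, ← neg_smul]
    congr 1
    omega

end Matrix

/-! ### Solutions of the PCB equations in a field -/

section Field

variable {ι : Type*} [Fintype ι] [DecidableEq ι] {a : ι → ι → ℕ}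

/-- The Laurent monomial with exponent in the column lattice of the PCB matrix is `1` at any
solution of the PCB equations with nonzero coordinates. -/
lemma prod_zpow_mulVec_s6 {K : Type*} [Field K] (ξ : ι → K) (hξ : ∀ i, ξ i ≠ 0)
    (h : ∀ j, ξ j ^ a j j = ∏ i ∈ Finset.univ.erase j, ξ i ^ a i j) (u : ι → ℤ) :
    ∏ i, ξ i ^ ((pcbMatrix a).mulVec u i) = 1 := by
  have hcol : ∀ j, ∏ i, ξ i ^ (pcbMatrix a i j) = 1 := by
    intro j
    rw [← Finset.mul_prod_erase _ _ (Finset.mem_univ j)]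
    have h2 : ∀ i ∈ Finset.univ.erase j, ξ i ^ (pcbMatrix a i j) = (ξ i ^ a i j)⁻¹ := by
      intro i hi
      simp [pcbMatrix, if_neg (Finset.ne_of_mem_erase hi)]
    rw [Finset.prod_congr rfl h2, Finset.prod_inv_distrib, ← h j]
    simp only [pcbMatrix, Matrix.of_apply, if_true, zpow_natCast]
    exact mul_inv_cancel₀ (pow_ne_zero _ (hξ j))
  calc ∏ i, ξ i ^ ((pcbMatrix a).mulVec u i)
      = ∏ i, ∏ j, (ξ i ^ (pcbMatrix a i j)) ^ u j := by
        refine Finset.prod_congr rfl fun i _ => ?_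
        simp only [Matrix.mulVec, dotProduct, ← zpow_mul]
        generalize (Finset.univ : Finset ι) = s
        induction s using Finset.induction_on with
        | empty => simp
        | insert x s hx ih => rw [Finset.sum_insert hx, Finset.prod_insert hx,
            zpow_add₀ (hξ i), ih]
    _ = ∏ j, (∏ i, ξ i ^ (pcbMatrix a i j)) ^ u j := by
        rw [Finset.prod_comm]
        simp only [Finset.prod_zpow]
    _ = 1 := by simp [hcol]

/-- In a field, nonzero solutions of the PCB equations have pairwise dependent coordinates:
`ξ_i ^ N = ξ_l ^ M` with `N > 0`. -/
lemma exists_pow_eq_pow {K : Type*} [Field K] (hpos : ∀ i j, 0 < a i j)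
    (hsum : ∀ i, a i i = ∑ j ∈ Finset.univ.erase i, a i j) (ξ : ι → K) (hξ : ∀ i, ξ i ≠ 0)
    (h : ∀ j, ξ j ^ a j j = ∏ i ∈ Finset.univ.erase j, ξ i ^ a i j) (i l : ι) (hil : i ≠ l) :
    ∃ N M : ℕ, 0 < N ∧ ξ i ^ N = ξ l ^ M := by
  have : Nonempty ι := ⟨i⟩
  obtain ⟨w, hw, hwa⟩ := exists_weights hpos hsum
  obtain ⟨c, hc, hcv⟩ := exists_mulVec_eq_smul hpos hsum w hw hwa
  obtain ⟨u, hu⟩ := hcv (Pi.single i (w l : ℤ) - Pi.single l (w i : ℤ)) (by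
    simp [mul_sub, Finset.sum_sub_distrib, Pi.single_apply]; ring)
  have h1 := prod_zpow_mulVec_s6 ξ hξ h u
  rw [hu] at h1
  refine ⟨c * w l, c * w i, Nat.mul_pos hc (hw l), ?_⟩
  rw [Finset.prod_eq_mul i l hil (by
    intro x _ hx
    simp [hx.1, hx.2]) (by simp) (by simp)] at h1
  simp only [Pi.smul_apply, Pi.sub_apply, Pi.single_eq_same, Pi.single_eq_of_ne hil,
    Pi.single_eq_of_ne hil.symm, sub_zero, zero_sub, smul_eq_mul, mul_neg, zpow_neg,
    ← Nat.cast_mul, zpow_natCast] at h1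
  exact (mul_inv_eq_one₀ (pow_ne_zero _ (hξ l))).1 h1

end Field

/-! ### Nonzerodivisors modulo the PCB ideal, and heights -/

section Ring

variable {k : Type*} [Field k]

lemma mem_span_X_of_constantCoeff {ι : Type*} (h : MvPolynomial ι k) (hh : constantCoeff h = 0) :
    h ∈ Ideal.span (Set.range (X : ι → MvPolynomial ι k)) := by
  rw [← Set.image_univ, mem_ideal_span_X_image]
  intro m hm
  by_contra hcon
  push Not at hcon
  have : m = 0 := by ext i; exact hcon i (Set.mem_univ i)
  rw [mem_support_iff, this] at hm
  exact hm hh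

/-- A polynomial whose constant coefficient is a unit is invertible as a power series, hence is
not a zero divisor. -/
lemma eq_zero_of_mul_eq_zero_of_isUnit_coeff_zero {B : Type*} [CommRing B] (r s : Polynomial B)
    (hr : IsUnit (r.coeff 0)) (h : r * s = 0) : s = 0 := by
  have hu : IsUnit (r : PowerSeries B) := by
    rw [PowerSeries.isUnit_iff_constantCoeff, ← PowerSeries.coeff_zero_eq_constantCoeff_apply,
      Polynomial.coeff_coe]
    exact hr
  have h2 : (r : PowerSeries B) * (s : PowerSeries B) = 0 := by
    rw [← Polynomial.coe_mul, h, Polynomial.coe_zero]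
  exact Polynomial.coe_eq_zero_iff.1 ((hu.mul_right_eq_zero).1 h2)

/-- Solutions of the PCB equations are stable under the rescaling `ξ_i ↦ ξ_i * t ^ w_i`. -/
lemma prod_weighted_eq {ι : Type*} [Fintype ι] [DecidableEq ι] {a : ι → ι → ℕ} {B : Type*}
    [CommRing B] (w : ι → ℕ) (ξ : ι → B) (j : ι)
    (hw : w j * a j j = ∑ i ∈ Finset.univ.erase j, w i * a i j)
    (hξ : ξ j ^ a j j = ∏ i ∈ Finset.univ.erase j, ξ i ^ a i j) :
    (Polynomial.C (ξ j) * Polynomial.X ^ w j) ^ a j j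
      = ∏ i ∈ Finset.univ.erase j, (Polynomial.C (ξ i) * Polynomial.X ^ w i) ^ a i j := by
  simp only [mul_pow, Finset.prod_mul_distrib, ← pow_mul, Finset.prod_pow_eq_pow_sum, ← hw,
    ← Polynomial.C_pow, hξ, map_prod]

/-- A PCB ideal is homogeneous for a positive grading, so a polynomial with nonzero constant term
is a nonzerodivisor modulo it. The grading is encoded by the coaction
`x_i ↦ t ^ w_i * x_i` into `(A ⧸ I)[t]`, which kills `I`, specialises to the quotient map at
`t = 1` and to the constant coefficient at `t = 0`. -/
lemma mem_of_mul_mem {ι : Type*} [Fintype ι] [DecidableEq ι] [Nonempty ι]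
    {a : ι → ι → ℕ} (hpos : ∀ i j, 0 < a i j)
    (hsum : ∀ i, a i i = ∑ j ∈ Finset.univ.erase i, a i j)
    (f : ι → MvPolynomial ι k)
    (hf : ∀ j, f j = X j ^ a j j - ∏ i ∈ Finset.univ.erase j, X i ^ a i j)
    (h g : MvPolynomial ι k) (hh : constantCoeff h ≠ 0)
    (hg : h * g ∈ Ideal.span (Set.range f)) : g ∈ Ideal.span (Set.range f) := by
  obtain ⟨w, hw, hwa⟩ := exists_weights hpos hsum
  set I := Ideal.span (Set.range f)
  let ψ : MvPolynomial ι k →ₐ[k] Polynomial (MvPolynomial ι k ⧸ I) :=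
    aeval fun i => Polynomial.C (Ideal.Quotient.mk I (X i)) * Polynomial.X ^ w i
  have hψI : I ≤ RingHom.ker ψ := by
    refine Ideal.span_le.2 ?_
    rintro _ ⟨j, rfl⟩
    have h0 : Ideal.Quotient.mk I (X j) ^ a j j
        = ∏ i ∈ Finset.univ.erase j, Ideal.Quotient.mk I (X i) ^ a i j := by
      have h1 : Ideal.Quotient.mk I (f j) = 0 :=
        Ideal.Quotient.eq_zero_iff_mem.2 (Ideal.subset_span ⟨j, rfl⟩)
      rw [hf j] at h1
      simpa [sub_eq_zero] using h1
    rw [SetLike.mem_coe, RingHom.mem_ker, hf j]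
    simp only [ψ, map_sub, map_pow, map_prod, aeval_X]
    exact sub_eq_zero.2 (prod_weighted_eq w (fun i => Ideal.Quotient.mk I (X i)) j (hwa j) h0)
  have hψ1 : ∀ q, (ψ q).eval 1 = Ideal.Quotient.mk I q := by
    intro q
    have : ((Polynomial.aeval (1 : MvPolynomial ι k ⧸ I)).restrictScalars k).comp ψ
        = Ideal.Quotient.mkₐ k I := by
      ext i
      simp [ψ]
    simpa using DFunLike.congr_fun this q
  have hψ0 : ∀ q, (ψ q).eval 0 = algebraMap k _ (constantCoeff q) := by
    intro q
    have : ((Polynomial.aeval (0 : MvPolynomial ι k ⧸ I)).restrictScalars k).comp ψ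
        = (Algebra.ofId k _).comp (aeval fun _ : ι => (0 : k)) := by
      ext i
      simp [ψ, (hw i).ne']
    have := DFunLike.congr_fun this q
    simpa [aeval_zero'] using this
  have h1 : ψ h * ψ g = 0 := by rw [← map_mul]; exact hψI hg
  have h2 : ψ g = 0 := by
    refine eq_zero_of_mul_eq_zero_of_isUnit_coeff_zero _ _ ?_ h1
    rw [Polynomial.coeff_zero_eq_eval_zero, hψ0]
    exact (isUnit_iff_ne_zero.2 hh).map _
  have h3 := hψ1 g
  rw [h2, Polynomial.eval_zero] at h3
  exact Ideal.Quotient.eq_zero_iff_mem.1 h3.symm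

/-- Let `p` be the kernel of a map `π` to a domain `D`. If in `D` every variable other than `x_0`
satisfies a pure power equation `x_i ^ N = x_0 ^ M` with `N > 0`, then `p` has height at least `n`.
The chain is given by the extensions of `p ∩ k[x_0, …, x_j]`, realised as kernels of the maps to
`D[X_0, …, X_n]` sending `x_i` to `π x_i` for `i ≤ j` and to `X_i` for `i > j`. -/
lemma le_height_of_pow_eq {n : ℕ} (p : Ideal (MvPolynomial (Fin (n + 1)) k)) (hp : p.IsPrime)
    {D : Type*} [CommRing D] [IsDomain D] [Algebra k D]
    (π : MvPolynomial (Fin (n + 1)) k →ₐ[k] D) (hπ : ∀ q, π q = 0 ↔ q ∈ p)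
    (hpow : ∀ i : Fin (n + 1), i ≠ 0 → ∃ N M : ℕ, 0 < N ∧
      π (X i) ^ N = π (X 0) ^ M) :
    (n : ℕ∞) ≤ Order.height (⟨p, hp⟩ : PrimeSpectrum (MvPolynomial (Fin (n + 1)) k)) := by
  let φ : Fin (n + 1) → MvPolynomial (Fin (n + 1)) k →ₐ[k] MvPolynomial (Fin (n + 1)) D :=
    fun j => aeval fun i => if i ≤ j then C (π (X i)) else X i
  have hφX : ∀ j i, φ j (X i) = if i ≤ j then C (π (X i)) else X i :=
    fun j i => aeval_X _ _
  let P : Fin (n + 1) → PrimeSpectrum (MvPolynomial (Fin (n + 1)) k) :=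
    fun j => ⟨RingHom.ker (φ j), RingHom.ker_isPrime _⟩
  have hlt : ∀ j : Fin n, P j.castSucc < P j.succ := by
    intro j
    rw [← PrimeSpectrum.asIdeal_lt_asIdeal]
    refine SetLike.lt_iff_le_and_exists.2 ⟨?_, ?_⟩
    · -- the map for `j + 1` factors through the map for `j`
      let θ : MvPolynomial (Fin (n + 1)) D →ₐ[D] MvPolynomial (Fin (n + 1)) D :=
        aeval fun i => if i ≤ j.succ then C (π (X i)) else X i
      have hθC : ∀ d, θ (C d) = C d := fun d => aeval_C _ d
      have hθX : ∀ i, θ (X i) = if i ≤ j.succ then C (π (X i)) else X i :=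
        fun i => aeval_X _ i
      have hfac : φ j.succ = (θ.restrictScalars k).comp (φ j.castSucc) := by
        refine algHom_ext fun i => ?_
        rw [AlgHom.comp_apply, AlgHom.restrictScalars_apply, hφX, hφX]
        by_cases hi : i ≤ j.castSucc
        · rw [if_pos hi, if_pos (hi.trans j.castSucc_lt_succ.le), hθC]
        · rw [if_neg hi, hθX]
      intro q hq
      change φ j.succ q = 0
      have hq' : φ j.castSucc q = 0 := hq
      rw [hfac, AlgHom.comp_apply, hq', map_zero]
    · obtain ⟨N, M, hN, hNM⟩ := hpow j.succ (Fin.succ_ne_zero j)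
      refine ⟨X j.succ ^ N - X 0 ^ M, ?_, ?_⟩
      · change φ j.succ _ = 0
        rw [map_sub, map_pow, map_pow, hφX, hφX, if_pos le_rfl, if_pos (Fin.zero_le _),
          ← C_pow, ← C_pow, hNM, sub_self]
      · intro hmem
        have h0 : φ j.castSucc (X j.succ ^ N - X 0 ^ M) = 0 := hmem
        rw [map_sub, map_pow, map_pow, hφX, hφX, if_pos (Fin.zero_le _),
          if_neg (not_le.2 j.castSucc_lt_succ), ← C_pow] at h0
        -- the coefficient of `X ^ N` is `1`
        have h1 := congrArg (coeff (Finsupp.single j.succ N)) h0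
        have h2 : (0 : Fin (n + 1) →₀ ℕ) ≠ Finsupp.single j.succ N := by
          intro h; exact hN.ne' (Finsupp.single_eq_zero.1 h.symm)
        rw [coeff_sub, coeff_X_pow, if_pos rfl, coeff_C, if_neg h2] at h1
        simp at h1
  let s : LTSeries (PrimeSpectrum (MvPolynomial (Fin (n + 1)) k)) := ⟨n, P, hlt⟩
  have hlast : s.last = ⟨p, hp⟩ := by
    ext q
    change φ (Fin.last n) q = 0 ↔ q ∈ p
    have hC : φ (Fin.last n) = (IsScalarTower.toAlgHom k D (MvPolynomial (Fin (n + 1)) D)).comp π := by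
      ext1 i
      rw [hφX, if_pos (Fin.le_last i)]
      rfl
    rw [hC, ← hπ]
    change C (π q) = 0 ↔ _
    exact C_eq_zero
  have := Order.length_le_height_last (p := s)
  rwa [hlast] at this

end Ring



/-- Every associated prime `p` of the PCB ideal `I` in
`A = k[x_0, …, x_n]` satisfies exactly one of: either `p` has height `n`
(size minus one) and no variable `x_i` belongs to `p`, or `p` is the maximal
ideal `𝔪 = (x_0, …, x_n)`. -/
theorem stmt6 {n : ℕ} (hn : 1 ≤ n) (k : Type*) [Field k]
    (a : Fin (n + 1) → Fin (n + 1) → ℕ) (hpos : ∀ i j, 0 < a i j)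
    (hsum : ∀ i, a i i = ∑ j ∈ Finset.univ.erase i, a i j)
    (f : Fin (n + 1) → MvPolynomial (Fin (n + 1)) k)
    (hf : ∀ j, f j = X j ^ a j j - ∏ i ∈ Finset.univ.erase j, X i ^ a i j)
    (I : Ideal (MvPolynomial (Fin (n + 1)) k)) (hI : I = Ideal.span (Set.range f)) :
    ∀ p, ∀ hp : p ∈ associatedPrimes (MvPolynomial (Fin (n + 1)) k)
        (MvPolynomial (Fin (n + 1)) k ⧸ I),
      Xor'
        (Order.height (⟨p, hp.1⟩ : PrimeSpectrum (MvPolynomial (Fin (n + 1)) k))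
            = (n : ℕ∞) ∧ ∀ i, X i ∉ p)
        (p = Ideal.span (Set.range (X : Fin (n + 1) → MvPolynomial (Fin (n + 1)) k))) := by
  intro p hp
  have hprime : p.IsPrime := hp.1
  obtain ⟨x, hx⟩ := ((isAssociatedPrime_iff).1 hp).2
  obtain ⟨g, rfl⟩ := Ideal.Quotient.mk_surjective x
  have hmem : ∀ r, r ∈ p ↔ r * g ∈ I := by
    intro r
    rw [hx, Submodule.mem_colon_singleton, Submodule.mem_bot, ← Ideal.Quotient.eq_zero_iff_mem,
      map_mul]
    rfl
  have hgI : g ∉ I := fun hg => hprime.ne_top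
    ((Ideal.eq_top_iff_one p).2 ((hmem 1).2 (by rwa [one_mul])))
  have hIp : I ≤ p := fun r hr => (hmem r).2 (I.mul_mem_right g hr)
  have hpm : ∀ h ∈ p, constantCoeff h = 0 := by
    intro h hh
    by_contra hne
    subst hI
    exact hgI (mem_of_mul_mem hpos hsum f hf h g hne ((hmem h).1 hh))
  have hrel : ∀ j, Ideal.Quotient.mk p (X j) ^ a j j
      = ∏ i ∈ Finset.univ.erase j, Ideal.Quotient.mk p (X i) ^ a i j := by
    intro j
    have h1 : Ideal.Quotient.mk p (f j) = 0 :=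
      Ideal.Quotient.eq_zero_iff_mem.2 (hIp (hI ▸ Ideal.subset_span ⟨j, rfl⟩))
    rw [hf j] at h1
    simpa [sub_eq_zero] using h1
  by_cases hX : ∃ i, X i ∈ p
  · obtain ⟨i, hi⟩ := hX
    have hall : ∀ j, X j ∈ p := by
      intro j
      by_cases hij : i = j
      · exact hij ▸ hi
      -- `x_i` divides the monomial in `f_j`, so `x_j ^ a_jj ∈ p`
      have h1 := hrel j
      rw [Finset.prod_eq_zero (Finset.mem_erase.2 ⟨hij, Finset.mem_univ i⟩)
        (by rw [Ideal.Quotient.eq_zero_iff_mem.2 hi, zero_pow (hpos i j).ne'])] at h1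
      exact Ideal.Quotient.eq_zero_iff_mem.1 (eq_zero_of_pow_eq_zero h1)
    refine Or.inr ⟨le_antisymm (fun h hh => mem_span_X_of_constantCoeff h (hpm h hh)) ?_,
      fun h => h.2 i hi⟩
    rw [Ideal.span_le]
    rintro _ ⟨j, rfl⟩
    exact hall j
  · push Not at hX
    refine Or.inl ⟨⟨le_antisymm ?_ ?_, hX⟩, fun h => hX 0 ?_⟩
    · -- `p` is strictly contained in the kernel of `constantCoeff`
      let m : PrimeSpectrum (MvPolynomial (Fin (n + 1)) k) :=
        ⟨RingHom.ker (constantCoeff : MvPolynomial (Fin (n + 1)) k →+* k), RingHom.ker_isPrime _⟩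
      have hlt : (⟨p, hp.1⟩ : PrimeSpectrum (MvPolynomial (Fin (n + 1)) k)) < m := by
        rw [← PrimeSpectrum.asIdeal_lt_asIdeal]
        exact SetLike.lt_iff_le_and_exists.2 ⟨hpm, X 0, constantCoeff_X _ _, hX 0⟩
      have h1 := Order.height_add_one_le hlt
      have h2 : (Order.height m : WithBot ℕ∞) ≤ ((n + 1 : ℕ) : ℕ∞) := by
        refine (Order.height_le_krullDim m).trans ?_
        have := MvPolynomial.ringKrullDim_of_isNoetherianRing (R := k) (ι := Fin (n + 1))
        rw [ringKrullDim_eq_zero_of_field, zero_add, Nat.card_fin] at this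
        exact this.le
      have h3 := h1.trans (WithBot.coe_le_coe.1 h2)
      rw [Nat.cast_add, Nat.cast_one] at h3
      exact (ENat.add_le_add_iff_right ENat.one_ne_top).1 h3
    · refine le_height_of_pow_eq p hprime (Ideal.Quotient.mkₐ k p)
        (fun q => Ideal.Quotient.eq_zero_iff_mem) fun i hi => ?_
      let K := FractionRing (MvPolynomial (Fin (n + 1)) k ⧸ p)
      have hinj := IsFractionRing.injective (MvPolynomial (Fin (n + 1)) k ⧸ p) K
      obtain ⟨N, M, hN, hNM⟩ := exists_pow_eq_pow (K := K) hpos hsum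
        (fun i => algebraMap _ K (Ideal.Quotient.mk p (X i)))
        (fun i h0 => hX i (Ideal.Quotient.eq_zero_iff_mem.1
          ((map_eq_zero_iff _ hinj).1 h0)))
        (fun j => by simp only [← map_pow, ← map_prod]; congr 1; simpa using hrel j) i 0 hi
      exact ⟨N, M, hN, hinj (by simpa using hNM)⟩
    · rw [h]; exact Ideal.subset_span ⟨0, rfl⟩
end

section
/- For every minimal prime 𝔭 of the PCB ideal I, the localized ideal I A_𝔭 is a complete intersection: I A_𝔭 is generated by f_1,…,f_{n−1}, which form a regular sequence of n−1 elements in A_𝔭. -/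
open MvPolynomial

/-!
Let `L` be the integer matrix with diagonal `a i i` and off-diagonal entries `-a i j`. Its rows
sum to zero, and column `j` is the difference of the two exponent vectors of `f j`.

*No minimal prime contains a variable.* If a prime over `I` contains one variable, the shape of
the `f j` forces it to contain all of them. There are positive integers `w` with `w L = 0`
(`PCB.exists_pos_weights`), so `I` lies in the kernel of `X i ↦ t ^ w i` into `k[t]`, a prime
strictly inside `(X 0, …, X n)`; hence `(X 0, …, X n)` is not minimal
(`PCB.X_notMem_of_mem_minimalPrimes`). So all variables become units in `A_p`.

*Generators.* Since the rows of `L` sum to zero, the product over `j` of the first monomials of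
the `f j` equals the product of the second ones. Modulo `f 0, …, f (n-1)` this says that a
monomial times `f n` vanishes (`PCB.prod_mul_last_mem`), and that monomial is a unit in `A_p`.

*Regularity.* Let `J = (f 0, …, f (i-1))`, let `H` be the lattice spanned by the first `i` columns
of `L`, and let `φ : A → k[ℤ^(n+1) / H]` be the map to the group algebra. It kills `J`, and as the
variables are units in `A_p`, the map `A → A_p / J A_p` factors through `φ`. The first `n` columns
of `L` are linearly independent by strict diagonal dominance (`PCB.linearIndependent_columns`), so
`φ (f i)` is a difference of two group elements that differ by an element of infinite order, and
such a difference is a nonzerodivisor (`PCB.single_sub_single_mul_eq_zero`). Hence `f i * c ∈ J`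
gives `φ c = 0`, and then `c ∈ J A_p` (`PCB.mem_map_of_mul_mem`).
-/

namespace PCB

/-! ### Binomials in group algebras -/

/-- In a group algebra, the difference of two group elements `g`, `h` with `g - h` of infinite
order is a nonzerodivisor: the coefficients of anything it annihilates are invariant under
translation by `g - h`, so a nonzero one would have infinite support. -/
theorem single_sub_single_mul_eq_zero {k G : Type*} [Field k] [AddCommGroup G] {g h : G}
    (hgh : ∀ m : ℤ, m • (g - h) = 0 → m = 0) {c : AddMonoidAlgebra k G}
    (hc : (AddMonoidAlgebra.single g 1 - AddMonoidAlgebra.single h 1) * c = 0) : c = 0 := by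
  have step : ∀ x, c.coeff (x + (g - h)) = c.coeff x := by
    intro x
    have h1 : AddMonoidAlgebra.single g 1 * c = AddMonoidAlgebra.single h 1 * c := by
      rwa [sub_mul, sub_eq_zero] at hc
    have h2 := congrArg (fun y => AddMonoidAlgebra.coeff y (g + x)) h1
    simp only [AddMonoidAlgebra.coeff_single_mul_apply, one_mul] at h2
    rw [show x + (g - h) = -h + (g + x) by abel, ← h2]
    congr 1
    abel
  have iter : ∀ (m : ℕ) (x), c.coeff (x + m • (g - h)) = c.coeff x := by
    intro m
    induction m with
    | zero => simp
    | succ m ih => intro x; rw [succ_nsmul, ← add_assoc, step, ih]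
  by_contra hne
  obtain ⟨x, hx⟩ : ∃ x, c.coeff x ≠ 0 := by
    by_contra! hall
    exact hne (AddMonoidAlgebra.coeff_injective (Finsupp.ext hall))
  have hinj : Function.Injective fun m : ℕ => x + m • (g - h) := by
    intro m m' hmm
    have h1 : m • (g - h) = m' • (g - h) := add_left_cancel hmm
    have h2 := hgh ((m : ℤ) - m') (by
      rw [sub_smul, natCast_zsmul, natCast_zsmul, h1, sub_self])
    omega
  refine Set.infinite_range_of_injective hinj (c.coeff.support.finite_toSet.subset ?_)
  rintro _ ⟨m, rfl⟩
  simpa [iter] using hx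

section Lattice

variable {σ : Type*} [Fintype σ] (k : Type*) [Field k]

/-- The homomorphism from the polynomial ring to the group algebra of `ℤ^σ / H` that sends a
monomial to the class of its exponent vector. -/
noncomputable def toGroupAlgebra (H : AddSubgroup (σ → ℤ)) :
    MvPolynomial σ k →ₐ[k] AddMonoidAlgebra k ((σ → ℤ) ⧸ H) :=
  open Classical in
  aeval fun s => AddMonoidAlgebra.single (QuotientAddGroup.mk (Pi.single s 1)) 1

variable {k}

theorem toGroupAlgebra_prod (H : AddSubgroup (σ → ℤ)) (e : σ → ℕ) :
    toGroupAlgebra k H (∏ s, X s ^ e s) =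
      AddMonoidAlgebra.single (QuotientAddGroup.mk fun s => (e s : ℤ)) 1 := by
  classical
  simp only [toGroupAlgebra, map_prod, map_pow, aeval_X, AddMonoidAlgebra.single_pow, one_pow]
  rw [AddMonoidAlgebra.prod_single]
  congr 1
  · have : (fun s => (e s : ℤ)) = ∑ s, e s • (Pi.single s 1 : σ → ℤ) := by
      ext t
      simp [Finset.sum_apply, Pi.single_apply]
    rw [this]
    exact (map_sum (QuotientAddGroup.mk' H) _ _).symm
  · simp

/-- A homomorphism `π` that makes the variables invertible and kills the binomials with exponent
pairs in `S` factors through the group algebra of `ℤ^σ` modulo the lattice spanned by the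
differences of these pairs; in particular it vanishes on the kernel of `toGroupAlgebra`. -/
theorem map_eq_zero_of_toGroupAlgebra {Q : Type*} [CommRing Q] (π : MvPolynomial σ k →+* Q)
    (hu : ∀ s, IsUnit (π (X s))) (S : Set ((σ → ℕ) × (σ → ℕ)))
    (hS : ∀ e ∈ S, π (∏ s, X s ^ e.1 s - ∏ s, X s ^ e.2 s) = 0)
    (c : MvPolynomial σ k)
    (hc : toGroupAlgebra k (Submodule.span ℤ
      ((fun e : (σ → ℕ) × (σ → ℕ) => fun s => (e.1 s : ℤ) - e.2 s) '' S)).toAddSubgroup c = 0) :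
    π c = 0 := by
  classical
  let u : σ → Qˣ := fun s => (hu s).unit
  -- The character `v ↦ ∏ s, π (X s) ^ v s`, which is trivial on the lattice.
  let χ : (σ → ℤ) →+ Additive Qˣ :=
    { toFun := fun v => Additive.ofMul (∏ s, u s ^ v s)
      map_zero' := by simp
      map_add' := fun v w => by
        simp [zpow_add, Finset.prod_mul_distrib] }
  set N := Submodule.span ℤ
      ((fun e : (σ → ℕ) × (σ → ℕ) => fun s => (e.1 s : ℤ) - e.2 s) '' S) with hN
  have hker : N.toAddSubgroup ≤ χ.ker := by
    have : N ≤ LinearMap.ker χ.toIntLinearMap := by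
      rw [hN, Submodule.span_le]
      rintro _ ⟨e, he, rfl⟩
      have h1 := hS e he
      rw [map_sub, sub_eq_zero] at h1
      simp only [map_prod, map_pow] at h1
      have h2 : ∏ s, u s ^ e.1 s = ∏ s, u s ^ e.2 s := by
        ext
        simpa [u] using h1
      change Additive.ofMul (∏ s, u s ^ ((e.1 s : ℤ) - e.2 s)) = 0
      rw [ofMul_eq_zero]
      simp only [zpow_sub, zpow_natCast, Finset.prod_mul_distrib, Finset.prod_inv_distrib, h2]
      simp
    exact fun v hv => this hv
  let _ : Algebra k Q := (π.comp C).toAlgebra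
  let ψ : AddMonoidAlgebra k ((σ → ℤ) ⧸ N.toAddSubgroup) →ₐ[k] Q :=
    AddMonoidAlgebra.lift k Q _ ((Units.coeHom Q).comp
      (AddMonoidHom.toMultiplicativeLeft (QuotientAddGroup.lift _ χ hker)))
  have hπ : π = ψ.toRingHom.comp (toGroupAlgebra k N.toAddSubgroup).toRingHom := by
    refine MvPolynomial.ringHom_ext (fun r => ?_) (fun s => ?_)
    · have : ψ (toGroupAlgebra k N.toAddSubgroup (algebraMap k _ r)) = algebraMap k Q r := by
        rw [AlgHom.commutes, AlgHom.commutes]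
      exact this.symm
    · have h1 : χ (Pi.single s 1) = Additive.ofMul (u s) := by
        change Additive.ofMul (∏ t, u t ^ (Pi.single s 1 : σ → ℤ) t) = _
        congr 1
        rw [Finset.prod_eq_single s]
        · simp
        · intro t _ hts; simp [hts]
        · simp
      have : ψ (toGroupAlgebra k N.toAddSubgroup (X s)) = π (X s) := by
        simp only [toGroupAlgebra, aeval_X, ψ, AddMonoidAlgebra.lift_single, one_smul]
        change (((χ (Pi.single s 1)).toMul : Qˣ) : Q) = _
        rw [h1]
        rfl
      exact this.symm
  rw [hπ]
  change ψ (toGroupAlgebra k N.toAddSubgroup c) = 0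
  rw [hc, map_zero]

/-- If the exponent difference of the `i`-th binomial has infinite order modulo the lattice of the
binomials indexed by `S`, then that binomial is a nonzerodivisor modulo the latter once the
variables are invertible. -/
theorem mem_map_of_mul_mem {R : Type*} [CommRing R] [Algebra (MvPolynomial σ k) R]
    (hu : ∀ s, IsUnit (algebraMap (MvPolynomial σ k) R (X s)))
    {ι : Type*} (α β : ι → σ → ℕ) (S : Set ι) (i : ι)
    (hind : ∀ m : ℤ, m • (fun s => (α i s : ℤ) - β i s) ∈
      Submodule.span ℤ ((fun j s => (α j s : ℤ) - β j s) '' S) → m = 0)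
    (J : Ideal (MvPolynomial σ k))
    (hJ : J = Ideal.span ((fun j => ∏ s, X s ^ α j s - ∏ s, X s ^ β j s) '' S))
    (c : MvPolynomial σ k)
    (hc : (∏ s, X s ^ α i s - ∏ s, X s ^ β i s) * c ∈ J) :
    algebraMap _ R c ∈ J.map (algebraMap _ R) := by
  let T : Set ((σ → ℕ) × (σ → ℕ)) := (fun j => (α j, β j)) '' S
  have hT : ((fun e : (σ → ℕ) × (σ → ℕ) => fun s => (e.1 s : ℤ) - e.2 s) '' T) =
      (fun j s => (α j s : ℤ) - β j s) '' S := by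
    simp only [T, Set.image_image]
  rw [← hT] at hind
  rw [← Ideal.Quotient.eq_zero_iff_mem]
  refine map_eq_zero_of_toGroupAlgebra
    ((Ideal.Quotient.mk (J.map (algebraMap _ R))).comp (algebraMap (MvPolynomial σ k) R))
    (fun s => (hu s).map (Ideal.Quotient.mk (J.map (algebraMap _ R)))) T ?_ c ?_
  · rintro _ ⟨j, hj, rfl⟩
    refine Ideal.Quotient.eq_zero_iff_mem.2 (Ideal.mem_map_of_mem _ ?_)
    rw [hJ]
    exact Ideal.subset_span ⟨j, hj, rfl⟩
  · set N := Submodule.span ℤ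
      ((fun e : (σ → ℕ) × (σ → ℕ) => fun s => (e.1 s : ℤ) - e.2 s) '' T) with hN
    have hJker : J ≤ RingHom.ker (toGroupAlgebra k N.toAddSubgroup) := by
      rw [hJ, Ideal.span_le]
      rintro _ ⟨j, hj, rfl⟩
      rw [SetLike.mem_coe, RingHom.mem_ker, map_sub, toGroupAlgebra_prod, toGroupAlgebra_prod,
        sub_eq_zero]
      congr 1
      rw [QuotientAddGroup.eq_iff_sub_mem]
      exact Submodule.subset_span ⟨(α j, β j), ⟨j, hj, rfl⟩, rfl⟩
    have h0 := hJker hc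
    rw [RingHom.mem_ker, map_mul, map_sub, toGroupAlgebra_prod, toGroupAlgebra_prod] at h0
    refine single_sub_single_mul_eq_zero (fun m hm => hind m ?_) h0
    rw [← QuotientAddGroup.mk_sub, ← QuotientAddGroup.mk_zsmul,
      QuotientAddGroup.eq_zero_iff] at hm
    exact hm

end Lattice

/-! ### The matrix `L` -/

/-- The matrix `L` has a left kernel vector with positive entries. For any `v ≠ 0` in the left
kernel, the triangle inequality bounds `|v j| * a j j` by `∑ i ≠ j, |v i| * a i j`; both sides
have the same sum over `j`, so these are equalities and `|v|` is in the left kernel too. It is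
positive everywhere because it is positive somewhere and all `a i j` are positive. -/
theorem exists_pos_weights {n : ℕ} (a : Fin (n + 1) → Fin (n + 1) → ℕ) (hpos : ∀ i j, 0 < a i j)
    (hsum : ∀ i, a i i = ∑ j ∈ Finset.univ.erase i, a i j) :
    ∃ w : Fin (n + 1) → ℕ, (∀ i, 0 < w i) ∧
      ∀ j, w j * a j j = ∑ i ∈ Finset.univ.erase j, w i * a i j := by
  let L : Matrix (Fin (n + 1)) (Fin (n + 1)) ℤ :=
    fun i j => if i = j then (a i i : ℤ) else -(a i j : ℤ)
  have hdet : L.det = 0 := by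
    rw [← Matrix.exists_mulVec_eq_zero_iff]
    refine ⟨fun _ => 1, fun h => one_ne_zero (congrFun h 0), ?_⟩
    ext i
    simp only [Matrix.mulVec, dotProduct, mul_one, Pi.zero_apply]
    rw [← Finset.add_sum_erase _ _ (Finset.mem_univ i),
      Finset.sum_congr rfl (g := fun j => -(a i j : ℤ))
        (fun j hj => by simp [L, (Finset.ne_of_mem_erase hj).symm])]
    simp only [L, if_true, Finset.sum_neg_distrib]
    have h := congrArg (Nat.cast : ℕ → ℤ) (hsum i)
    push_cast at h
    linarith
  obtain ⟨v, hv0, hv⟩ := Matrix.exists_vecMul_eq_zero_iff.2 hdet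
  have hv' : ∀ j, v j * a j j = ∑ i ∈ Finset.univ.erase j, v i * a i j := by
    intro j
    have h := congrFun hv j
    simp only [Matrix.vecMul, dotProduct, Pi.zero_apply] at h
    rw [← Finset.add_sum_erase _ _ (Finset.mem_univ j),
      Finset.sum_congr rfl (g := fun i => -(v i * a i j : ℤ))
        (fun i hi => by simp [L, Finset.ne_of_mem_erase hi])] at h
    simp only [L, if_true, Finset.sum_neg_distrib] at h
    linarith
  have hle : ∀ j, (v j).natAbs * a j j ≤ ∑ i ∈ Finset.univ.erase j, (v i).natAbs * a i j := by
    intro j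
    have h := congrArg Int.natAbs (hv' j)
    rw [Int.natAbs_mul, Int.natAbs_natCast] at h
    rw [h]
    refine (Int.natAbs_sum_le _ _).trans (Finset.sum_le_sum fun i _ => ?_)
    rw [Int.natAbs_mul, Int.natAbs_natCast]
  have htot : ∑ j, (v j).natAbs * a j j =
      ∑ j, ∑ i ∈ Finset.univ.erase j, (v i).natAbs * a i j := by
    rw [Finset.sum_comm' (s' := fun i => Finset.univ.erase i) (t' := Finset.univ)
      (by intro x y; simp [eq_comm])]
    exact Finset.sum_congr rfl fun i _ => by rw [← Finset.mul_sum, ← hsum i]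
  have heq := (Finset.sum_eq_sum_iff_of_le fun j _ => hle j).1 htot
  obtain ⟨i, hi⟩ := Function.ne_iff.1 hv0
  refine ⟨fun i => (v i).natAbs, fun j => ?_, fun j => heq j (Finset.mem_univ j)⟩
  by_cases hij : i = j
  · subst hij; exact Int.natAbs_pos.2 hi
  · have h1 : 0 < (v j).natAbs * a j j := by
      rw [heq j (Finset.mem_univ j)]
      exact (Nat.mul_pos (Int.natAbs_pos.2 hi) (hpos i j)).trans_le
        (Finset.single_le_sum (f := fun i => (v i).natAbs * a i j) (fun _ _ => Nat.zero_le _)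
          (Finset.mem_erase.2 ⟨hij, Finset.mem_univ _⟩))
    exact Nat.pos_of_mul_pos_right h1

/-- The first `n` columns of `L` are linearly independent: dropping the last row leaves a strictly
diagonally dominant square matrix. -/
theorem linearIndependent_columns {n : ℕ} (a : Fin (n + 1) → Fin (n + 1) → ℕ)
    (hpos : ∀ i j, 0 < a i j)
    (hsum : ∀ i, a i i = ∑ j ∈ Finset.univ.erase i, a i j) :
    LinearIndependent ℤ fun (j : Fin n) (s : Fin (n + 1)) =>
      if s = j.castSucc then (a s s : ℤ) else -(a s j.castSucc : ℤ) := by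
  let M : Matrix (Fin n) (Fin n) ℤ := fun i j =>
    if i = j then (a i.castSucc i.castSucc : ℤ) else -(a i.castSucc j.castSucc : ℤ)
  have hM : ∀ i j, M i j =
      if i = j then (a i.castSucc i.castSucc : ℤ) else -(a i.castSucc j.castSucc : ℤ) :=
    fun _ _ => rfl
  have hdet : M.det ≠ 0 := by
    have h : (M.map (Int.castRingHom ℝ)).det ≠ 0 := by
      refine det_ne_zero_of_sum_row_lt_diag fun i => ?_
      rw [Finset.sum_congr rfl (g := fun j : Fin n => (a i.castSucc j.castSucc : ℝ))
        (fun j hj => by simp [Matrix.map_apply, hM, (Finset.ne_of_mem_erase hj).symm])]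
      have h1 := hsum i.castSucc
      have h2 := Finset.add_sum_erase Finset.univ (fun j => a i.castSucc j)
        (Finset.mem_univ i.castSucc)
      have h3 := Finset.add_sum_erase Finset.univ (fun j : Fin n => a i.castSucc j.castSucc)
        (Finset.mem_univ i)
      rw [Fin.sum_univ_castSucc] at h2
      have h4 := hpos i.castSucc (Fin.last n)
      have h5 : ∑ j ∈ Finset.univ.erase i, a i.castSucc j.castSucc
          < a i.castSucc i.castSucc := by
        omega
      have h6 : ‖M.map (Int.castRingHom ℝ) i i‖ = (a i.castSucc i.castSucc : ℝ) := by
        simp [Matrix.map_apply, hM]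
      rw [h6]
      exact_mod_cast h5
    intro h0
    apply h
    rw [← RingHom.mapMatrix_apply, ← RingHom.map_det, h0, map_zero]
  refine LinearIndependent.of_comp (LinearMap.funLeft ℤ ℤ Fin.castSucc) ?_
  have hcol : (LinearMap.funLeft ℤ ℤ Fin.castSucc ∘ fun (j : Fin n) (s : Fin (n + 1)) =>
      if s = j.castSucc then (a s s : ℤ) else -(a s j.castSucc : ℤ)) = M.col := by
    ext j i
    simp [LinearMap.funLeft, Matrix.col_apply, hM]
  rw [hcol]
  exact Matrix.linearIndependent_cols_of_det_ne_zero hdet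

/-! ### The ideal `I` and its minimal primes -/

/-- No minimal prime of the ideal contains a variable. -/
theorem X_notMem_of_mem_minimalPrimes {n : ℕ} {k : Type*} [Field k]
    (a : Fin (n + 1) → Fin (n + 1) → ℕ) (hpos : ∀ i j, 0 < a i j)
    (hsum : ∀ i, a i i = ∑ j ∈ Finset.univ.erase i, a i j)
    (f : Fin (n + 1) → MvPolynomial (Fin (n + 1)) k)
    (hf : ∀ j, f j = X j ^ a j j - ∏ i ∈ Finset.univ.erase j, X i ^ a i j)
    (p : Ideal (MvPolynomial (Fin (n + 1)) k)) [p.IsPrime]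
    (hp : p ∈ (Ideal.span (Set.range f)).minimalPrimes) (s : Fin (n + 1)) : X s ∉ p := by
  intro hs
  have hfp : ∀ j, f j ∈ p := fun j => hp.1.2 (Ideal.subset_span ⟨j, rfl⟩)
  have hall : ∀ j, X j ∈ p := by
    intro j
    by_cases hj : s = j
    · exact hj ▸ hs
    · have h1 : ∏ i ∈ Finset.univ.erase j, X i ^ a i j ∈ p :=
        Ideal.mem_of_dvd p
          (Finset.dvd_prod_of_mem (fun i => (X i : MvPolynomial (Fin (n + 1)) k) ^ a i j)
            (Finset.mem_erase.2 ⟨hj, Finset.mem_univ s⟩))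
          (Ideal.pow_mem_of_mem p hs _ (hpos s j))
      have h2 := p.add_mem (hfp j) h1
      rw [hf, sub_add_cancel] at h2
      exact Ideal.IsPrime.mem_of_pow_mem inferInstance _ h2
  obtain ⟨w, hw0, hw⟩ := exists_pos_weights a hpos hsum
  let θ : MvPolynomial (Fin (n + 1)) k →ₐ[k] Polynomial k :=
    aeval fun i => (Polynomial.X : Polynomial k) ^ w i
  have hIθ : Ideal.span (Set.range f) ≤ RingHom.ker θ := by
    rw [Ideal.span_le]
    rintro _ ⟨j, rfl⟩
    rw [SetLike.mem_coe, RingHom.mem_ker, hf, map_sub, map_prod]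
    simp only [map_pow, θ, aeval_X, ← pow_mul]
    rw [Finset.prod_pow_eq_pow_sum, hw, sub_self]
  -- To see `ker θ ≤ p`: reduction mod `p` factors through the constant coefficient because `p`
  -- contains all variables, and the constant coefficient factors through `θ` (evaluate at `t = 0`)
  -- because all weights are positive.
  have hmk : Ideal.Quotient.mk p = ((Ideal.Quotient.mk p).comp C).comp constantCoeff := by
    refine MvPolynomial.ringHom_ext (fun r => by simp) (fun i => ?_)
    simpa using Ideal.Quotient.eq_zero_iff_mem.2 (hall i)
  have hcc : (constantCoeff : MvPolynomial (Fin (n + 1)) k →+* k) =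
      (Polynomial.evalRingHom 0).comp θ.toRingHom := by
    refine MvPolynomial.ringHom_ext (fun r => ?_) (fun i => ?_)
    · simp [θ, Polynomial.algebraMap_eq]
    · simp [θ, (hw0 i).ne']
  have hle : RingHom.ker θ ≤ p := by
    intro g hg
    rw [← Ideal.Quotient.eq_zero_iff_mem, hmk, RingHom.comp_apply, hcc, RingHom.comp_apply,
      RingHom.comp_apply]
    have hg0 : θ.toRingHom g = 0 := hg
    rw [hg0, map_zero, map_zero, map_zero]
  have hker := hp.2 ⟨RingHom.ker_isPrime _, hIθ⟩ hle
  have h0 : θ (X s) = 0 := hker hs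
  simp [θ] at h0

/-- Some monomial multiplies the last binomial into the ideal of the others. -/
theorem prod_mul_last_mem {n : ℕ} {k : Type*} [Field k]
    (a : Fin (n + 1) → Fin (n + 1) → ℕ)
    (hsum : ∀ i, a i i = ∑ j ∈ Finset.univ.erase i, a i j)
    (f : Fin (n + 1) → MvPolynomial (Fin (n + 1)) k)
    (hf : ∀ j, f j = X j ^ a j j - ∏ i ∈ Finset.univ.erase j, X i ^ a i j) :
    (∏ j : Fin n, X j.castSucc ^ a j.castSucc j.castSucc) * f (Fin.last n) ∈
      Ideal.span (Set.range fun i : Fin n => f i.castSucc) := by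
  set J := Ideal.span (Set.range fun i : Fin n => f i.castSucc) with hJ
  have hprod : ∏ j, (X j : MvPolynomial (Fin (n + 1)) k) ^ a j j =
      ∏ j, ∏ i ∈ Finset.univ.erase j, X i ^ a i j := by
    rw [Finset.prod_comm' (s' := fun i => Finset.univ.erase i) (t' := Finset.univ)
      (by intro x y; simp [eq_comm])]
    exact Finset.prod_congr rfl fun i _ => by rw [Finset.prod_pow_eq_pow_sum, ← hsum i]
  rw [← Ideal.Quotient.eq_zero_iff_mem]
  have hq : ∀ j : Fin n, Ideal.Quotient.mk J (X j.castSucc ^ a j.castSucc j.castSucc) =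
      Ideal.Quotient.mk J (∏ i ∈ Finset.univ.erase j.castSucc, X i ^ a i j.castSucc) := by
    intro j
    rw [Ideal.Quotient.eq, ← hf]
    exact Ideal.subset_span ⟨j, rfl⟩
  have h := congrArg (Ideal.Quotient.mk J) hprod
  rw [Fin.prod_univ_castSucc, Fin.prod_univ_castSucc, map_mul, map_mul] at h
  have h1 : Ideal.Quotient.mk J
        (∏ j : Fin n, ∏ i ∈ Finset.univ.erase j.castSucc, X i ^ a i j.castSucc) =
      Ideal.Quotient.mk J (∏ j : Fin n, X j.castSucc ^ a j.castSucc j.castSucc) := by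
    rw [map_prod, map_prod]
    exact Finset.prod_congr rfl fun j _ => (hq j).symm
  rw [h1] at h
  rw [hf, map_mul, map_sub, mul_sub, h, sub_self]

end PCB



/-- For every minimal prime `p` of the PCB ideal
`I = (f 0, …, f n)` in `A = k[x_0, …, x_n]`, the localized ideal `I A_p` is a complete
intersection: it is generated by the first `n` binomials `f 0, …, f (n-1)`, which form
a regular sequence of `n` (= size minus one) elements in the localization `A_p`. -/
theorem stmt7 {n : ℕ} (hn : 1 ≤ n) (k : Type*) [Field k]
    (a : Fin (n + 1) → Fin (n + 1) → ℕ) (hpos : ∀ i j, 0 < a i j)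
    (hsum : ∀ i, a i i = ∑ j ∈ Finset.univ.erase i, a i j)
    (f : Fin (n + 1) → MvPolynomial (Fin (n + 1)) k)
    (hf : ∀ j, f j = X j ^ a j j - ∏ i ∈ Finset.univ.erase j, X i ^ a i j)
    (I : Ideal (MvPolynomial (Fin (n + 1)) k)) (hI : I = Ideal.span (Set.range f))
    (p : Ideal (MvPolynomial (Fin (n + 1)) k)) [p.IsPrime] (hp : p ∈ I.minimalPrimes) :
    I.map (algebraMap (MvPolynomial (Fin (n + 1)) k) (Localization.AtPrime p)) =
        Ideal.span (Set.range fun i : Fin n =>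
          algebraMap (MvPolynomial (Fin (n + 1)) k) (Localization.AtPrime p)
            (f i.castSucc)) ∧
      RingTheory.Sequence.IsRegular (Localization.AtPrime p)
        (List.ofFn fun i : Fin n =>
          algebraMap (MvPolynomial (Fin (n + 1)) k) (Localization.AtPrime p)
            (f i.castSucc)) := by
  subst hI
  let A := MvPolynomial (Fin (n + 1)) k
  let R := Localization.AtPrime p
  have hX := PCB.X_notMem_of_mem_minimalPrimes a hpos hsum f hf p hp
  have hu : ∀ s, IsUnit (algebraMap A R (X s)) := fun s =>
    IsLocalization.map_units R (⟨X s, hX s⟩ : p.primeCompl)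
  have hfp : ∀ j, f j ∈ p := fun j => hp.1.2 (Ideal.subset_span ⟨j, rfl⟩)
  refine ⟨le_antisymm ?_ ?_, ⟨⟨fun i hi => ?_⟩, ?_⟩⟩
  · rw [Ideal.map_span, Ideal.span_le]
    rintro _ ⟨_, ⟨j, rfl⟩, rfl⟩
    induction j using Fin.lastCases with
    | cast j => exact Ideal.subset_span ⟨j, rfl⟩
    | last =>
      have h := Ideal.mem_map_of_mem (algebraMap A R) (PCB.prod_mul_last_mem a hsum f hf)
      rw [Ideal.map_span, ← Set.range_comp, map_mul] at h
      refine (Ideal.unit_mul_mem_iff_mem _ ?_).1 h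
      rw [map_prod, IsUnit.prod_univ_iff]
      intro j
      rw [map_pow]
      exact (hu _).pow _
  · rw [Ideal.span_le]
    rintro _ ⟨j, rfl⟩
    exact Ideal.mem_map_of_mem _ (Ideal.subset_span ⟨j.castSucc, rfl⟩)
  · have hin : i < n := by simpa using hi
    -- `α j` and `β j` are the exponent vectors of the two monomials of `f j.castSucc`.
    let α : Fin n → Fin (n + 1) → ℕ := fun j s => if s = j.castSucc then a s s else 0
    let β : Fin n → Fin (n + 1) → ℕ := fun j s => if s = j.castSucc then 0 else a s j.castSucc
    have hαβ : ∀ j : Fin n, f j.castSucc = ∏ s, X s ^ α j s - ∏ s, X s ^ β j s := by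
      intro j
      rw [hf]
      congr 1
      · rw [Finset.prod_eq_single j.castSucc]
        · simp [α]
        · intro s _ hs; simp [α, hs]
        · simp
      · rw [← Finset.mul_prod_erase _ _ (Finset.mem_univ j.castSucc)]
        simp only [β, if_true, pow_zero, one_mul]
        exact Finset.prod_congr rfl fun s hs => by simp [Finset.ne_of_mem_erase hs]
    let S : Set (Fin n) := {j | j.val < i}
    have hSi : S ⊆ Set.univ \ {⟨i, hin⟩} := fun j hj =>
      ⟨Set.mem_univ _, fun hji => absurd (congrArg Fin.val hji) (ne_of_lt hj)⟩
    let J : Ideal A := Ideal.span ((fun j : Fin n => f j.castSucc) '' S)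
    have hJ : J = Ideal.span ((fun j => ∏ s, X s ^ α j s - ∏ s, X s ^ β j s) '' S) := by
      simp only [J, hαβ]
    have hδ : (fun (j : Fin n) s => (α j s : ℤ) - β j s) = fun (j : Fin n) (s : Fin (n + 1)) =>
        if s = j.castSucc then (a s s : ℤ) else -(a s j.castSucc : ℤ) := by
      ext j s
      by_cases h : s = j.castSucc <;> simp [α, β, h]
    have hind : LinearIndependent ℤ (fun (j : Fin n) s => (α j s : ℤ) - β j s) :=
      hδ ▸ PCB.linearIndependent_columns a hpos hsum
    have hlist : (Ideal.ofList ((List.ofFn fun i : Fin n =>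
        algebraMap A R (f i.castSucc)).take i) • ⊤ : Submodule R R) = J.map (algebraMap A R) := by
      rw [Ideal.smul_top_eq_map, Algebra.algebraMap_self, Ideal.map_id, Ideal.map_span,
        Set.image_image, ← Fin.ofFn_take_eq_take_ofFn hin.le]
      refine congrArg Ideal.span (Set.ext fun y => ?_)
      change y ∈ List.ofFn _ ↔ _
      rw [List.mem_ofFn]
      constructor
      · rintro ⟨j, rfl⟩
        exact ⟨Fin.castLE hin.le j, j.2, rfl⟩
      · rintro ⟨j, hj, rfl⟩
        exact ⟨⟨j, hj⟩, rfl⟩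
    rw [isSMulRegular_quotient_iff_mem_of_smul_mem]
    change ∀ x : R, _ → _
    rw [hlist]
    intro x hx
    rw [List.getElem_ofFn, smul_eq_mul] at hx
    obtain ⟨⟨b, t⟩, hbt⟩ := IsLocalization.surj p.primeCompl x
    have ht : IsUnit (algebraMap A R t) := IsLocalization.map_units R t
    have hb : algebraMap A R (f (Fin.castSucc ⟨i, hin⟩) * b) ∈ J.map (algebraMap A R) := by
      rw [map_mul, ← hbt, ← mul_assoc]
      exact Ideal.mul_mem_right _ _ hx
    obtain ⟨m, hm, hmb⟩ :=
      (IsLocalization.algebraMap_mem_map_algebraMap_iff p.primeCompl R J _).1 hb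
    have hmem := PCB.mem_map_of_mul_mem (R := R) hu α β S ⟨i, hin⟩
      (fun z hz => hind.eq_zero_of_smul_mem_span ⟨i, hin⟩ z
        (Submodule.span_mono (Set.image_mono hSi) hz))
      J hJ (m * b) (by rw [← hαβ, mul_left_comm]; exact hmb)
    have hmu : IsUnit (algebraMap A R m) := IsLocalization.map_units R ⟨m, hm⟩
    rw [map_mul, Ideal.unit_mul_mem_iff_mem _ hmu, ← hbt, Ideal.mul_unit_mem_iff_mem _ ht] at hmem
    exact hmem
  · rw [Ideal.smul_top_eq_map, Algebra.algebraMap_self, Ideal.map_id]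
    intro h
    have hle : Ideal.ofList (List.ofFn fun i : Fin n => algebraMap A R (f i.castSucc)) ≤
        IsLocalRing.maximalIdeal R := by
      refine Ideal.span_le.2 ?_
      intro y hy
      obtain ⟨j, rfl⟩ := List.mem_ofFn.1 hy
      exact (IsLocalization.AtPrime.to_map_mem_maximal_iff R p _).2 (hfp _)
    exact (IsLocalRing.maximalIdeal.isMaximal R).ne_top (top_le_iff.1 (h.le.trans hle))
end

section
/- For every nonzero α ∈ ℕ_0^n, the contraction S(I) of the extension of the PCB ideal I to the Laurent polynomial ring equals the saturation I : (x^α)^∞; that is, S(I) = {f ∈ A : f x^{Nα} ∈ I for some N ≥ 0}. -/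
/-!
By the description of contracted extensions along a localization, `S(I)` consists of the `g` with
`g * x ^ K ∈ I` for some `K`, where `x` is the product of all variables. It therefore suffices to
compare powers of `x` and of `x^α` up to divisibility modulo `I`.

* `x^(Nα)` divides a power of `x`, already in the polynomial ring.
* Pick `i` with `α i ≠ 0`. Modulo `f i`, the power `X i ^ a i i` equals the product of the
  `X j ^ a j i` over `j ≠ i`. As all exponents `a j i` are positive, `X i ^ (a i i + 1)` is
  a multiple of `x` modulo `I`, while `X i` divides `x^α`. So `x` divides a power of `x^α`
  modulo `I`.
-/

open MvPolynomial

/-- Let `I` be the PCB ideal in `A = k[x_0, …, x_n]` and let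
`B = A_x` be the localization of `A` at `x = x_0 ⋯ x_n` (the Laurent polynomial ring),
and `S(I) = IB ∩ A` the contraction of the extension of `I`.  Then for every nonzero
`α : Fin (n+1) → ℕ`, `S(I)` equals the saturation
`I : (x^α)^∞ = {g : g·x^{Nα} ∈ I for some N}`. -/
theorem stmt8 {n : ℕ} (hn : 1 ≤ n) (k : Type*) [Field k]
    (a : Fin (n + 1) → Fin (n + 1) → ℕ) (hpos : ∀ i j, 0 < a i j)
    (hsum : ∀ i, a i i = ∑ j ∈ Finset.univ.erase i, a i j)
    (f : Fin (n + 1) → MvPolynomial (Fin (n + 1)) k)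
    (hf : ∀ j, f j = X j ^ a j j - ∏ i ∈ Finset.univ.erase j, X i ^ a i j)
    (I : Ideal (MvPolynomial (Fin (n + 1)) k)) (hI : I = Ideal.span (Set.range f)) :
    ∀ α : Fin (n + 1) → ℕ, α ≠ 0 →
      ∀ g : MvPolynomial (Fin (n + 1)) k,
        g ∈ (I.map (algebraMap (MvPolynomial (Fin (n + 1)) k)
              (Localization (Submonoid.powers (∏ i, (X i : MvPolynomial (Fin (n + 1)) k)))))).comap
            (algebraMap (MvPolynomial (Fin (n + 1)) k)
              (Localization (Submonoid.powers (∏ i, (X i : MvPolynomial (Fin (n + 1)) k))))) ↔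
          ∃ N : ℕ, g * ∏ i, X i ^ (N * α i) ∈ I := by
  intro α hα g
  set x : MvPolynomial (Fin (n + 1)) k := ∏ i, X i with hx
  have key : ∀ K : ℕ, g * x ^ K ∈ I → ∃ N : ℕ, g * ∏ i, X i ^ (N * α i) ∈ I := by
    intro K hK
    obtain ⟨i, hi⟩ : ∃ i, α i ≠ 0 := Function.ne_iff.mp hα
    have hfi : f i ∈ I := hI ▸ Ideal.subset_span ⟨i, rfl⟩
    -- The right-hand side agrees with `X i ^ (a i i + 1)` modulo `f i`.
    have hdvd : x ∣ X i * ∏ j ∈ Finset.univ.erase i, X j ^ a j i := by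
      rw [hx, ← Finset.mul_prod_erase _ _ (Finset.mem_univ i)]
      exact mul_dvd_mul_left _ (Finset.prod_dvd_prod_of_dvd _ _ fun j _ =>
        dvd_pow_self _ (hpos j i).ne')
    obtain ⟨h, hh⟩ := hdvd
    have hmod : Ideal.Quotient.mk I (X i ^ (a i i + 1)) = Ideal.Quotient.mk I (x * h) := by
      rw [Ideal.Quotient.eq, ← hh]
      have := I.mul_mem_left (X i) hfi
      rwa [hf, mul_sub, ← pow_succ'] at this
    have hpow : g * X i ^ ((a i i + 1) * K) ∈ I := by
      rw [← Ideal.Quotient.eq_zero_iff_mem] at hK ⊢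
      rw [pow_mul, map_mul, map_pow, hmod, ← map_pow, ← map_mul, mul_pow, ← mul_assoc,
        map_mul, hK, zero_mul]
    refine ⟨(a i i + 1) * K, I.mem_of_dvd (mul_dvd_mul_left g ?_) hpow⟩
    exact (pow_dvd_pow _ (Nat.le_mul_of_pos_right _ (Nat.pos_of_ne_zero hi))).trans
      (Finset.dvd_prod_of_mem (fun j => (X j : MvPolynomial (Fin (n + 1)) k) ^
        ((a i i + 1) * K * α j)) (Finset.mem_univ i))
  rw [Ideal.mem_comap, IsLocalization.algebraMap_mem_map_algebraMap_iff (Submonoid.powers x)]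
  constructor
  · rintro ⟨_, ⟨K, rfl⟩, hK⟩
    exact key K (by rwa [mul_comm])
  · rintro ⟨N, hN⟩
    refine ⟨_, ⟨N * ∑ i, α i, rfl⟩, ?_⟩
    rw [mul_comm]
    refine I.mem_of_dvd (mul_dvd_mul_left g ?_) hN
    beta_reduce
    rw [hx, ← Finset.prod_pow]
    exact Finset.prod_dvd_prod_of_dvd _ _ fun j _ => pow_dvd_pow _
      (Nat.mul_le_mul_left _ (Finset.single_le_sum (fun _ _ => Nat.zero_le _) (Finset.mem_univ j)))
end
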